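/- arXiv:1309.7970 — 11 statements merged into one kernel-verified Lean document; each statement's English description precedes it below -/
import Mathlib

section
/- Let x₀ < x₁ < ⋯ < xₙ be real nodes and let x̂₀ = x₀ < x̂₁ < ⋯ < x̂_{n−1} < x̂ₙ = xₙ. Fix k ∈ {0, …, n} and set ξ := Σ_{j≠k} |r_{jk}(x, x̂)|. If ξ < 1, then −(ξ²/(1−ξ)³)·(1 + ξ²/4) ≤ z_k(x, x̂) − Σ_{j≠k} r_{jk}(x, x̂) ≤ ξ²/(1−ξ). -/
/-- Barycentric weight `λ_k(x) = 1 / ∏_{j ≠ k} (x_k - x_j)`. -/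
noncomputable def lam {n : ℕ} (x : Fin (n + 1) → ℝ) (k : Fin (n + 1)) : ℝ :=
  (∏ j ∈ Finset.univ.erase k, (x k - x j))⁻¹

/-- Relative error in the weights `z_k(x, x̂)`. -/
noncomputable def zk {n : ℕ} (x xh : Fin (n + 1) → ℝ) (k : Fin (n + 1)) : ℝ :=
  (lam x k - lam xh k) / lam xh k

/-- Relative error in the node differences `r_{jk}(x, x̂)`. -/
noncomputable def rjk {n : ℕ} (x xh : Fin (n + 1) → ℝ) (j k : Fin (n + 1)) : ℝ :=
  (xh k - xh j) / (x k - x j) - 1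

/-!
Cancelling the weights gives `1 + z_k = ∏_{j ≠ k} (1 + r_{jk})`, so `z_k - ∑ r_{jk}` consists of the
terms of degree at least two of the expanded product. In absolute value these are at most the
corresponding terms of `exp ξ`, so `|z_k - ∑ r_{jk}| ≤ exp ξ - 1 - ξ`, and `exp ξ ≤ 1 / (1 - ξ)`
turns this into `ξ² / (1 - ξ)`. The same bound from below is sharper than the one claimed.
-/

lemma norm_prod_one_add_sub_one_sub_sum_le {ι R : Type*} [NormedCommRing R] [NormOneClass R]
    (s : Finset ι) (f : ι → R) :
    ‖∏ i ∈ s, (1 + f i) - 1 - ∑ i ∈ s, f i‖ ≤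
      Real.exp (∑ i ∈ s, ‖f i‖) - 1 - ∑ i ∈ s, ‖f i‖ := by
  classical
  induction s using Finset.induction_on with
  | empty => simp
  | insert a s ha ih =>
    have hprod := s.norm_prod_one_add_sub_one_le f
    rw [Finset.prod_insert ha, Finset.sum_insert ha, Finset.sum_insert ha]
    set P := ∏ i ∈ s, (1 + f i)
    set S := ∑ i ∈ s, f i
    set T := ∑ i ∈ s, ‖f i‖
    have hexp : (‖f a‖ + 1) * Real.exp T ≤ Real.exp (‖f a‖ + T) := by
      rw [Real.exp_add]
      gcongr
      exact Real.add_one_le_exp _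
    calc ‖(1 + f a) * P - 1 - (f a + S)‖
        = ‖(P - 1 - S) + f a * (P - 1)‖ := by congr 1; ring
      _ ≤ ‖P - 1 - S‖ + ‖f a‖ * ‖P - 1‖ := norm_add_le_of_le le_rfl (norm_mul_le _ _)
      _ ≤ (Real.exp T - 1 - T) + ‖f a‖ * (Real.exp T - 1) := by gcongr
      _ = (‖f a‖ + 1) * Real.exp T - 1 - (‖f a‖ + T) := by ring
      _ ≤ Real.exp (‖f a‖ + T) - 1 - (‖f a‖ + T) := by gcongr

lemma exp_sub_one_sub_self_le_sq_div_one_sub {t : ℝ} (ht : t < 1) :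
    Real.exp t - 1 - t ≤ t ^ 2 / (1 - t) := by
  have hpos : 0 < 1 - t := sub_pos.mpr ht
  have hexp : Real.exp t ≤ (1 - t)⁻¹ := by
    rw [← inv_inv (Real.exp t), ← Real.exp_neg]
    exact inv_anti₀ hpos (Real.one_sub_le_exp_neg t)
  calc Real.exp t - 1 - t ≤ (1 - t)⁻¹ - 1 - t := by gcongr
    _ = t ^ 2 / (1 - t) := by field_simp; ring

lemma neg_sq_div_one_sub_cube_mul_le {t : ℝ} (h0 : 0 ≤ t) (h1 : t < 1) :
    -(t ^ 2 / (1 - t) ^ 3) * (1 + t ^ 2 / 4) ≤ -(t ^ 2 / (1 - t)) := by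
  have hpos : 0 < 1 - t := sub_pos.mpr h1
  have hcube : (1 - t) ^ 3 ≤ 1 - t := pow_le_of_le_one hpos.le (by linarith) three_ne_zero
  rw [neg_mul, neg_le_neg_iff]
  calc t ^ 2 / (1 - t) ≤ t ^ 2 / (1 - t) ^ 3 := by gcongr
    _ ≤ t ^ 2 / (1 - t) ^ 3 * (1 + t ^ 2 / 4) :=
      le_mul_of_one_le_right (by positivity) (le_add_of_nonneg_right (by positivity))

section Weights

variable {n : ℕ} {x xh : Fin (n + 1) → ℝ} {k : Fin (n + 1)}

/-- If `x j = x k` for some `j ≠ k`, both sides are `-1`, because `a / 0 = 0`. -/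
lemma zk_eq_prod_one_add_rjk_sub_one (hxh : ∀ j ≠ k, xh j ≠ xh k) :
    zk x xh k = ∏ j ∈ Finset.univ.erase k, (1 + rjk x xh j k) - 1 := by
  have hne : ∏ j ∈ Finset.univ.erase k, (xh k - xh j) ≠ 0 :=
    Finset.prod_ne_zero_iff.mpr fun j hj =>
      sub_ne_zero.mpr (hxh j (Finset.ne_of_mem_erase hj)).symm
  simp only [zk, lam, rjk, add_sub_cancel, Finset.prod_div_distrib]
  rw [sub_div, div_self (inv_ne_zero hne), inv_div_inv]

lemma ne_of_abs_rjk_lt_one {j : Fin (n + 1)} (h : |rjk x xh j k| < 1) : xh j ≠ xh k := by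
  intro heq
  have hr : rjk x xh j k = -1 := by simp [rjk, heq]
  simp [hr] at h

/-- A coincidence `x j = x k` with `j ≠ k` makes `rjk x xh j k = -1`, because `a / 0 = 0`, so it
never occurs when `ξ < 1`. -/
theorem stmt_0_general {ξ : ℝ} (hξ : ξ = ∑ j ∈ Finset.univ.erase k, |rjk x xh j k|)
    (hξ1 : ξ < 1) :
    |zk x xh k - ∑ j ∈ Finset.univ.erase k, rjk x xh j k| ≤ ξ ^ 2 / (1 - ξ) := by
  have hxh : ∀ j ≠ k, xh j ≠ xh k := fun j hj =>
    ne_of_abs_rjk_lt_one <| lt_of_le_of_lt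
      (Finset.single_le_sum (f := fun j => |rjk x xh j k|) (fun _ _ => abs_nonneg _)
        (Finset.mem_erase.mpr ⟨hj, Finset.mem_univ j⟩)) (hξ ▸ hξ1)
  have hexp : |zk x xh k - ∑ j ∈ Finset.univ.erase k, rjk x xh j k| ≤ Real.exp ξ - 1 - ξ := by
    rw [zk_eq_prod_one_add_rjk_sub_one hxh, hξ]
    exact norm_prod_one_add_sub_one_sub_sum_le _ fun j => rjk x xh j k
  exact hexp.trans (exp_sub_one_sub_self_le_sq_div_one_sub hξ1)

end Weights

theorem stmt_0 {n : ℕ} (x xh : Fin (n + 1) → ℝ)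
    (hx : StrictMono x) (hxh : StrictMono xh)
    (h0 : xh 0 = x 0) (hn : xh (Fin.last n) = x (Fin.last n))
    (k : Fin (n + 1)) (ξ : ℝ)
    (hξ : ξ = ∑ j ∈ Finset.univ.erase k, |rjk x xh j k|)
    (hξ1 : ξ < 1) :
    -(ξ ^ 2 / (1 - ξ) ^ 3) * (1 + ξ ^ 2 / 4) ≤
        zk x xh k - ∑ j ∈ Finset.univ.erase k, rjk x xh j k ∧
      zk x xh k - ∑ j ∈ Finset.univ.erase k, rjk x xh j k ≤ ξ ^ 2 / (1 - ξ) := by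
  have hξ0 : 0 ≤ ξ := hξ ▸ Finset.sum_nonneg fun _ _ => abs_nonneg _
  obtain ⟨hlo, hhi⟩ := abs_le.mp (stmt_0_general hξ hξ1)
  exact ⟨(neg_sq_div_one_sub_cube_mul_le hξ0 hξ1).trans hlo, hhi⟩
end

section
/- Let n ≥ 1, let x_k be the Chebyshev points of the second kind, let θ ∈ ℝ^{n+1}, and set x̂_k := (1 + θ_k)·x_k for k = 0, …, n. Then for every k ∈ {0, …, n}, Σ_{j≠k} |r_{jk}(x, x̂)| ≤ 2.6·‖θ‖_∞·n², where ‖θ‖_∞ = max_k |θ_k|. -/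
/-!
If every node moves by at most `ε`, then `|r_{jk}| ≤ 2 ε / |x_k - x_j|`, so the theorem reduces to
`∑_{j ≠ k} 1 / |x_k - x_j| ≤ n²`, which even gives the constant `2`.

Writing `cos a - cos b = 2 sin ((a + b) / 2) sin ((b - a) / 2)` and applying Jordan's inequality to
both sines gives `|x_k - x_j| ≥ 2 d m / n²`, where `d = |k - j|` and `m = min (j + k) (2n - j - k)`.
The symmetry `i ↦ n - i` leaves only the nodes `j < k`. If `k < n`, then `m ≥ d + 1` except at
`j = 0`, where `m ≥ d`, and the terms `1 / (d (d + 1))` telescope: this side contributes at most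
`n² / 2`. If `k = n`, there is only one side, and `∑ 1 / d² ≤ 2` suffices.
-/

open Finset Real
open Polynomial.Chebyshev (node node_lt)

lemma two_div_pi_mul_min_le_sin {x : ℝ} (hx₀ : 0 ≤ x) (hxπ : x ≤ π) :
    2 / π * min x (π - x) ≤ sin x := by
  rcases le_total x (π / 2) with hx | hx
  · grw [min_le_left]
    exact mul_le_sin hx₀ hx
  · grw [min_le_right, ← sin_pi_sub]
    exact mul_le_sin (by linarith) (by linarith)

lemma two_div_pi_sq_mul_sub_mul_min_le_cos_sub_cos {a b : ℝ} (ha : 0 ≤ a) (hab : a ≤ b)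
    (hb : b ≤ π) :
    2 / π ^ 2 * ((b - a) * min (a + b) (2 * π - (a + b))) ≤ cos a - cos b := by
  have sin_half_diff : 2 / π * ((b - a) / 2) ≤ sin ((b - a) / 2) :=
    mul_le_sin (by linarith) (by linarith)
  have sin_half_sum : 2 / π * min ((a + b) / 2) (π - (a + b) / 2) ≤ sin ((a + b) / 2) :=
    two_div_pi_mul_min_le_sin (by linarith) (by linarith)
  have min_half : min ((a + b) / 2) (π - (a + b) / 2) = min (a + b) (2 * π - (a + b)) / 2 := by
    rw [show π - (a + b) / 2 = (2 * π - (a + b)) / 2 by ring,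
      min_div_div_right (zero_le_two (α := ℝ))]
  have min_nonneg : 0 ≤ min (a + b) (2 * π - (a + b)) := le_min (by linarith) (by linarith)
  have sin_half_diff_nonneg : 0 ≤ sin ((b - a) / 2) :=
    sin_nonneg_of_nonneg_of_le_pi (by linarith) (by linarith)
  calc 2 / π ^ 2 * ((b - a) * min (a + b) (2 * π - (a + b)))
      = 2 * (2 / π * ((b - a) / 2) * (2 / π * min ((a + b) / 2) (π - (a + b) / 2))) := by
        rw [min_half]
        ring
    _ ≤ 2 * (sin ((b - a) / 2) * sin ((a + b) / 2)) := by
        rw [min_half] at sin_half_sum ⊢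
        gcongr
    _ = cos a - cos b := by
        rw [cos_sub_cos, show (a - b) / 2 = -((b - a) / 2) by ring, sin_neg]
        ring

lemma two_div_sq_mul_sub_mul_min_le_node_sub_node {n j k : ℕ} (hjk : j < k) (hkn : k ≤ n) :
    2 / n ^ 2 * (((k : ℝ) - j) * min ((j : ℝ) + k) (2 * n - (j + k))) ≤ node n j - node n k := by
  have hn : (0 : ℝ) < n := by exact_mod_cast (by lia : 0 < n)
  have angle_le_pi : k * π / n ≤ π := by
    rw [div_le_iff₀ hn, mul_comm]
    gcongr
  have angle_sub : k * π / n - j * π / n = (k - j) * (π / n) := by ring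
  have angle_add : j * π / n + k * π / n = (j + k) * (π / n) := by ring
  have two_pi_sub : 2 * π - (j + k) * (π / n) = (2 * n - (j + k)) * (π / n) := by field_simp
  have gap := two_div_pi_sq_mul_sub_mul_min_le_cos_sub_cos (a := j * π / n) (by positivity)
    (by gcongr) angle_le_pi
  rw [angle_sub, angle_add, two_pi_sub, ← min_mul_of_nonneg _ _ (by positivity)] at gap
  refine Eq.trans_le ?_ gap
  field_simp

lemma inv_node_sub_node_le {n j k m : ℕ} (hjk : j < k) (hkn : k ≤ n) (hm : 0 < m)
    (hm_le : m ≤ j + k) (hm_le' : m + (j + k) ≤ 2 * n) :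
    (node n j - node n k)⁻¹ ≤ n ^ 2 / 2 * (((k : ℝ) - j) * m)⁻¹ := by
  have hn : (0 : ℝ) < n := by exact_mod_cast (by lia : 0 < n)
  have hd : (0 : ℝ) < k - j := sub_pos.2 (by exact_mod_cast hjk)
  have m_le_min : (m : ℝ) ≤ min ((j : ℝ) + k) (2 * n - (j + k)) :=
    le_min (by exact_mod_cast hm_le) (le_sub_iff_add_le.2 (by exact_mod_cast hm_le'))
  have gap : 2 / n ^ 2 * (((k : ℝ) - j) * m) ≤ node n j - node n k := by
    grw [m_le_min]
    exact two_div_sq_mul_sub_mul_min_le_node_sub_node hjk hkn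
  calc (node n j - node n k)⁻¹ ≤ (2 / n ^ 2 * (((k : ℝ) - j) * m))⁻¹ :=
        inv_anti₀ (by positivity) gap
    _ = n ^ 2 / 2 * (((k : ℝ) - j) * m)⁻¹ := by rw [mul_inv, inv_div]

lemma sum_range_inv_succ_mul_add_two (N : ℕ) :
    ∑ i ∈ range N, (((i : ℝ) + 1) * (i + 2))⁻¹ = 1 - ((N : ℝ) + 1)⁻¹ := by
  have telescoping (i : ℕ) :
      (((i : ℝ) + 1) * (i + 2))⁻¹ = ((i : ℝ) + 1)⁻¹ - (((i + 1 : ℕ) : ℝ) + 1)⁻¹ := by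
    push_cast
    field_simp
    ring
  simp only [telescoping, sum_range_sub' fun i : ℕ ↦ ((i : ℝ) + 1)⁻¹]
  simp

lemma sum_range_inv_node_sub_node_le_of_lt {n k : ℕ} (hkn : k < n) :
    ∑ j ∈ range k, (node n j - node n k)⁻¹ ≤ n ^ 2 / 2 := by
  rcases k with _ | K
  · simp only [range_zero, sum_empty]
    positivity
  have end_node : (node n 0 - node n (K + 1))⁻¹ ≤ n ^ 2 / 2 * ((K : ℝ) + 1)⁻¹ :=
    calc (node n 0 - node n (K + 1))⁻¹ ≤ n ^ 2 / 2 * (((K : ℝ) + 1) * (K + 1))⁻¹ := by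
          simpa using inv_node_sub_node_le (m := K + 1) K.succ_pos hkn.le (by lia) (by lia) (by lia)
      _ ≤ n ^ 2 / 2 * ((K : ℝ) + 1)⁻¹ := by
          gcongr
          nlinarith [(K.cast_nonneg : (0 : ℝ) ≤ K)]
  have interior_node (i : ℕ) (hi : i < K) :
      (node n (K - 1 - i + 1) - node n (K + 1))⁻¹ ≤
        n ^ 2 / 2 * (((i : ℝ) + 1) * (i + 2))⁻¹ := by
    have distance : ((K + 1 : ℕ) : ℝ) - (K - 1 - i + 1 : ℕ) = i + 1 := by
      rw [← Nat.cast_sub (by lia)]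
      exact_mod_cast (by lia : K + 1 - (K - 1 - i + 1) = i + 1)
    have bound := inv_node_sub_node_le (j := K - 1 - i + 1) (m := i + 2)
      (by lia) hkn.le (by lia) (by lia) (by lia)
    rw [distance] at bound
    exact_mod_cast bound
  calc ∑ j ∈ range (K + 1), (node n j - node n (K + 1))⁻¹
      = ∑ i ∈ range K, (node n (K - 1 - i + 1) - node n (K + 1))⁻¹
          + (node n 0 - node n (K + 1))⁻¹ := by
        rw [sum_range_succ', sum_range_reflect fun j ↦ (node n (j + 1) - node n (K + 1))⁻¹]
    _ ≤ ∑ i ∈ range K, n ^ 2 / 2 * (((i : ℝ) + 1) * (i + 2))⁻¹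
          + n ^ 2 / 2 * ((K : ℝ) + 1)⁻¹ := by
        gcongr with i hi
        exact interior_node i (mem_range.1 hi)
    _ = n ^ 2 / 2 := by
        rw [← mul_sum, sum_range_inv_succ_mul_add_two]
        ring

lemma sum_range_inv_node_sub_node_self_le (n : ℕ) :
    ∑ j ∈ range n, (node n j - node n n)⁻¹ ≤ n ^ 2 := by
  have term_le (j : ℕ) (hj : j < n) :
      (node n j - node n n)⁻¹ ≤ n ^ 2 / 2 * (((n - j : ℕ) : ℝ) ^ 2)⁻¹ := by
    rw [sq ((n - j : ℕ) : ℝ)]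
    nth_rw 1 [Nat.cast_sub hj.le]
    exact inv_node_sub_node_le hj le_rfl (by lia) (by lia) (by lia)
  calc ∑ j ∈ range n, (node n j - node n n)⁻¹
      ≤ ∑ j ∈ range n, (n : ℝ) ^ 2 / 2 * (((n - j : ℕ) : ℝ) ^ 2)⁻¹ :=
        sum_le_sum fun j hj ↦ term_le j (mem_range.1 hj)
    _ = n ^ 2 / 2 * ∑ d ∈ Ioo 0 (n + 1), ((d : ℝ) ^ 2)⁻¹ := by
        rw [← mul_sum, range_eq_Ico, sum_Ico_reflect (fun d ↦ ((d : ℝ) ^ 2)⁻¹) 0 n.le_succ]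
        congr 2
        ext d
        simp only [mem_Ico, mem_Ioo]
        lia
    _ ≤ n ^ 2 / 2 * (2 / ((0 : ℕ) + 1)) := by
        gcongr
        exact sum_Ioo_inv_sq_le 0 (n + 1)
    _ = n ^ 2 := by
        push_cast
        ring

lemma node_sub_eq_neg_node {n i : ℕ} (hn : n ≠ 0) (hi : i ≤ n) : node n (n - i) = -node n i := by
  rw [node, node, ← cos_pi_sub, Nat.cast_sub hi]
  congr 1
  field_simp

-- The term `j = k` on the left is `0⁻¹ = 0`.
lemma sum_range_inv_abs_node_sub_node_eq {n k : ℕ} (hkn : k ≤ n) :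
    ∑ j ∈ range (n + 1), |node n j - node n k|⁻¹ =
      ∑ j ∈ range k, (node n j - node n k)⁻¹ +
        ∑ j ∈ range (n - k), (node n j - node n (n - k))⁻¹ := by
  have below (j : ℕ) (hj : j < k) : |node n j - node n k|⁻¹ = (node n j - node n k)⁻¹ := by
    rw [abs_of_pos (sub_pos.2 (node_lt hkn hj))]
  have above (j : ℕ) (hj : j < n - k) :
      |node n (n - j) - node n k|⁻¹ = (node n j - node n (n - k))⁻¹ := by
    have reflection : node n (n - j) - node n k = -(node n j - node n (n - k)) := by
      have hn : n ≠ 0 := by lia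
      rw [node_sub_eq_neg_node hn (by lia), node_sub_eq_neg_node hn hkn]
      ring
    rw [reflection, abs_neg, abs_of_pos (sub_pos.2 (node_lt (n.sub_le k) hj))]
  calc ∑ j ∈ range (n + 1), |node n j - node n k|⁻¹
      = ∑ j ∈ range k, |node n j - node n k|⁻¹ +
          ∑ j ∈ Ico (k + 1) (n + 1), |node n j - node n k|⁻¹ := by
        rw [← sum_range_add_sum_Ico _ (by lia : k + 1 ≤ n + 1), sum_range_succ]
        simp
    _ = ∑ j ∈ range k, |node n j - node n k|⁻¹ +
          ∑ j ∈ range (n - k), |node n (n - j) - node n k|⁻¹ := by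
        rw [range_eq_Ico (n - k),
          sum_Ico_reflect (fun j ↦ |node n j - node n k|⁻¹) 0 (by lia),
          show n + 1 - (n - k) = k + 1 by lia, Nat.sub_zero]
    _ = _ := by
        rw [sum_congr rfl fun j hj ↦ below j (mem_range.1 hj),
          sum_congr rfl fun j hj ↦ above j (mem_range.1 hj)]

lemma sum_range_inv_abs_node_sub_node_le {n k : ℕ} (hkn : k ≤ n) :
    ∑ j ∈ range (n + 1), |node n j - node n k|⁻¹ ≤ n ^ 2 := by
  rw [sum_range_inv_abs_node_sub_node_eq hkn]
  rcases k.eq_zero_or_pos with rfl | hk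
  · simpa using sum_range_inv_node_sub_node_self_le n
  rcases hkn.eq_or_lt with rfl | hkn
  · simpa using sum_range_inv_node_sub_node_self_le k
  · linarith [sum_range_inv_node_sub_node_le_of_lt hkn,
      sum_range_inv_node_sub_node_le_of_lt (Nat.sub_lt (hk.trans hkn) hk)]

lemma abs_rjk_le {n : ℕ} {x xh : Fin (n + 1) → ℝ} {ε : ℝ} {j k : Fin (n + 1)}
    (hjk : x j ≠ x k) (hj : |xh j - x j| ≤ ε) (hk : |xh k - x k| ≤ ε) :
    |rjk x xh j k| ≤ 2 * ε * |x j - x k|⁻¹ := by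
  have rjk_eq : rjk x xh j k = ((xh k - x k) - (xh j - x j)) / (x k - x j) := by
    rw [rjk, div_sub_one (sub_ne_zero.2 hjk.symm)]
    ring
  rw [rjk_eq, abs_div, abs_sub_comm (x k), div_eq_mul_inv]
  gcongr
  linarith [abs_sub (xh k - x k) (xh j - x j)]

theorem stmt_1_general {n : ℕ} {x xh : Fin (n + 1) → ℝ} {ε : ℝ}
    (hx : ∀ k : Fin (n + 1), x k = -cos ((k : ℕ) * π / n))
    (hxh : ∀ k, |xh k - x k| ≤ ε) (k : Fin (n + 1)) :
    ∑ j ∈ univ.erase k, |rjk x xh j k| ≤ 2 * ε * n ^ 2 := by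
  have hε : 0 ≤ ε := (abs_nonneg _).trans (hxh k)
  have x_eq (i : Fin (n + 1)) : x i = -node n i := hx i
  have x_injective : Function.Injective x := fun i j hij ↦ by
    rw [x_eq, x_eq, neg_inj] at hij
    exact Fin.ext <| (Polynomial.Chebyshev.strictAntiOn_node n).injOn
      (by simpa using i.2) (by simpa using j.2) hij
  calc ∑ j ∈ univ.erase k, |rjk x xh j k|
      ≤ ∑ j ∈ univ.erase k, 2 * ε * |x j - x k|⁻¹ := sum_le_sum fun j hj ↦
        abs_rjk_le (x_injective.ne (ne_of_mem_erase hj)) (hxh j) (hxh k)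
    _ = 2 * ε * ∑ j ∈ range (n + 1), |node n j - node n k|⁻¹ := by
        rw [sum_erase _ (by simp), ← mul_sum,
          ← Fin.sum_univ_eq_sum_range fun j ↦ |node n j - node n k|⁻¹]
        simp only [x_eq, neg_sub_neg, abs_sub_comm (node n k)]
    _ ≤ 2 * ε * n ^ 2 := by
        gcongr
        exact sum_range_inv_abs_node_sub_node_le k.is_le

lemma abs_one_add_mul_sub_self_le {t y ε : ℝ} (ht : |t| ≤ ε) (hy : |y| ≤ 1) :
    |(1 + t) * y - y| ≤ ε := by
  rw [show (1 + t) * y - y = t * y by ring, abs_mul]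
  exact (mul_le_of_le_one_right (abs_nonneg t) hy).trans ht

theorem stmt_1 {n : ℕ} (hn : 1 ≤ n) (θ x xh : Fin (n + 1) → ℝ)
    (hx : ∀ k : Fin (n + 1), x k = -Real.cos ((k : ℕ) * Real.pi / n))
    (hxh : ∀ k : Fin (n + 1), xh k = (1 + θ k) * x k)
    (k : Fin (n + 1)) :
    ∑ j ∈ Finset.univ.erase k, |rjk x xh j k| ≤
      2.6 * (Finset.univ.sup' Finset.univ_nonempty fun i => |θ i|) * n ^ 2 := by
  have θ_le (i) : |θ i| ≤ univ.sup' univ_nonempty fun i ↦ |θ i| := le_sup' (|θ ·|) (mem_univ i)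
  have xh_sub_le (i) : |xh i - x i| ≤ univ.sup' univ_nonempty fun i ↦ |θ i| := by
    rw [hxh]
    exact abs_one_add_mul_sub_self_le (θ_le i) (by simpa [hx] using abs_cos_le_one _)
  have sup_nonneg := (abs_nonneg _).trans (θ_le k)
  refine (stmt_1_general hx xh_sub_le k).trans ?_
  gcongr
  norm_num
end

section
/- Let x₀ < ⋯ < xₙ be real nodes and let x̂₀ = x₀ < x̂₁ < ⋯ < x̂_{n−1} < x̂ₙ = xₙ. Suppose δ := max_{0≤k≤n} Σ_{j≠k} |r_{jk}(x, x̂)| < 0.01 and max_k |x̂_k − x_k| ≤ 0.1·min_{j≠k} |x_j − x_k|. Then Λ(x̂) ≤ (1 + 4δ)·Λ(x), where Λ(x) and Λ(x̂) are the Lebesgue constants of the node families x and x̂ over the interval [x₀, xₙ]. -/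
/-- The Lebesgue constant of the node family `v` over the interval `[a, b]`:
`sup_{t ∈ [a,b]} ∑_k |ℓ_k(t)|`, with `ℓ_k` the Lagrange basis polynomials of `v`. -/
noncomputable def leb {ι : Type*} [Fintype ι] [DecidableEq ι] (v : ι → ℝ) (a b : ℝ) : ℝ :=
  ⨆ t : Set.Icc a b, ∑ k, |(Lagrange.basis Finset.univ v k).eval (t : ℝ)|

/-!
Write `y` for the perturbed nodes. A point `s` between neighbours `y p` and `y q` is compared with
the point `t` dividing `[x p, x q]` in the same ratio. No node `x j` separates `x p` from `x q`, so
`|t - x j|` is the corresponding average of `|x p - x j|` and `|x q - x j|`, whence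
`|s - y j| ≤ (1 + |r_{jp}| + |r_{jq}|) |t - x j|`. In the `k`-th Lagrange basis polynomial the
factor belonging to `j` thus grows at most by `1 / (1 - (|r_{jp}| + |r_{jq}| + |r_{jk}|))`, and by
the Weierstrass product inequality the product of these bounds is at most `1 / (1 - 3δ) ≤ 1 + 4δ`.
-/

open Finset Function

section OrderedRing

variable {ι R : Type*} [CommRing R] [LinearOrder R] [IsStrictOrderedRing R]

theorem one_sub_sum_le_prod_one_sub (s : Finset ι) {f : ι → R} (hf₀ : ∀ i ∈ s, 0 ≤ f i)
    (hf₁ : ∀ i ∈ s, f i ≤ 1) : 1 - ∑ i ∈ s, f i ≤ ∏ i ∈ s, (1 - f i) := by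
  induction s using Finset.cons_induction with
  | empty => simp
  | cons a s ha ih =>
    rw [Finset.forall_mem_cons] at hf₀ hf₁
    rw [sum_cons, prod_cons]
    have hsum : 0 ≤ ∑ i ∈ s, f i := sum_nonneg hf₀.2
    calc 1 - (f a + ∑ i ∈ s, f i) ≤ (1 - f a) * (1 - ∑ i ∈ s, f i) := by
          linarith [mul_nonneg hf₀.1 hsum]
      _ ≤ (1 - f a) * ∏ i ∈ s, (1 - f i) :=
          mul_le_mul_of_nonneg_left (ih hf₀.2 hf₁.2) (sub_nonneg.2 hf₁.1)

theorem abs_combo_sub_of_wcovBy [LinearOrder ι] {x : ι → R} (hx : Monotone x) {p q : ι}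
    (hpq : p ⩿ q) (j : ι) {u w : R} (hu : 0 ≤ u) (hw : 0 ≤ w) (huw : u + w = 1) :
    |u * x p + w * x q - x j| = u * |x p - x j| + w * |x q - x j| := by
  have hsplit : u * x p + w * x q - x j = u * (x p - x j) + w * (x q - x j) := by
    linear_combination x j * huw
  have hsign : 0 ≤ x p - x j ∧ 0 ≤ x q - x j ∨ x p - x j ≤ 0 ∧ x q - x j ≤ 0 := by
    simp only [sub_nonneg, sub_nonpos]
    obtain hj | hj := lt_or_ge j q
    · exact .inl ⟨hx (hpq.le_of_lt hj), hx hj.le⟩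
    · exact .inr ⟨hx (hpq.le.trans hj), hx hj⟩
  rw [hsplit, (abs_add_eq_add_abs_iff _ _).2, abs_mul, abs_mul, abs_of_nonneg hu,
    abs_of_nonneg hw]
  exact hsign.imp
    (fun h => ⟨mul_nonneg hu h.1, mul_nonneg hw h.2⟩)
    (fun h => ⟨mul_nonpos_of_nonneg_of_nonpos hu h.1, mul_nonpos_of_nonneg_of_nonpos hw h.2⟩)

end OrderedRing

theorem one_sub_add_mul_div_le_div {K : Type*} [Field K] [LinearOrder K]
    [IsStrictOrderedRing K] {a b m m' d d' : K} (ha : 0 ≤ a) (hb : 0 ≤ b) (hab : a + b < 1)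
    (hm : 0 ≤ m) (hd : 0 < d) (hm' : m' ≤ (1 + a) * m) (hd' : (1 - b) * d ≤ d') :
    (1 - (a + b)) * (m' / d') ≤ m / d := by
  have hb₁ : 0 < 1 - b := by linarith
  have hcoeff : (1 - (a + b)) * (1 + a) ≤ 1 - b := by nlinarith
  calc (1 - (a + b)) * (m' / d')
      ≤ (1 - (a + b)) * ((1 + a) * m / ((1 - b) * d)) := by
        have : 0 ≤ 1 - (a + b) := by linarith
        gcongr
    _ = (1 - (a + b)) * (1 + a) * m / ((1 - b) * d) := by ring
    _ ≤ (1 - b) * m / ((1 - b) * d) := by gcongr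
    _ = m / d := mul_div_mul_left _ _ hb₁.ne'

theorem exists_wcovBy_mem_Icc {ι α : Type*} [LinearOrder ι] [Finite ι] [LinearOrder α]
    (v : ι → α) {a b : ι} (hab : a ≤ b) {t : α} (ht : t ∈ Set.Icc (v a) (v b)) :
    ∃ p q, a ≤ p ∧ q ≤ b ∧ p ⩿ q ∧ t ∈ Set.Icc (v p) (v q) := by
  obtain ⟨p, ⟨⟨hap, hpb⟩, hpt⟩, hpmax⟩ :=
    (Set.toFinite {i | i ∈ Set.Icc a b ∧ v i ≤ t}).exists_maximal ⟨a, ⟨le_rfl, hab⟩, ht.1⟩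
  obtain rfl | hpb := hpb.eq_or_lt
  · exact ⟨p, p, hap, le_rfl, .refl p, hpt, ht.2⟩
  · obtain ⟨q, hpq, hqb⟩ := exists_covBy_le_of_lt hpb
    exact ⟨p, q, hap, hqb, hpq.wcovBy, hpt, le_of_not_ge fun hqt =>
      hpq.lt.not_ge (hpmax ⟨⟨hap.trans hpq.le, hqb⟩, hqt⟩ hpq.le)⟩

section RelError

variable {ι : Type*} {x y : ι → ℝ}

/-- The relative error `|r_{jk}(x, y)|` of the node differences, written so that the convention
`0 / 0 = 0` makes it vanish on the diagonal `j = k`. -/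
noncomputable def relError (x y : ι → ℝ) (j k : ι) : ℝ :=
  |(y k - y j) - (x k - x j)| / |x k - x j|

theorem relError_nonneg (x y : ι → ℝ) (j k : ι) : 0 ≤ relError x y j k := by
  unfold relError
  positivity

theorem relError_mul_abs_sub (hx : Injective x) (y : ι → ℝ) (j k : ι) :
    relError x y j k * |x k - x j| = |(y k - y j) - (x k - x j)| := by
  obtain rfl | hjk := eq_or_ne j k
  · simp
  · exact div_mul_cancel₀ _ (abs_ne_zero.2 (sub_ne_zero.2 (hx.ne hjk.symm)))

theorem abs_sub_le_one_add_relError_mul (hx : Injective x) (y : ι → ℝ) (j k : ι) :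
    |y k - y j| ≤ (1 + relError x y j k) * |x k - x j| := by
  rw [one_add_mul, relError_mul_abs_sub hx]
  linarith [abs_sub_abs_le_abs_sub (y k - y j) (x k - x j)]

theorem one_sub_relError_mul_le_abs_sub (hx : Injective x) (y : ι → ℝ) (j k : ι) :
    (1 - relError x y j k) * |x k - x j| ≤ |y k - y j| := by
  rw [one_sub_mul, relError_mul_abs_sub hx, abs_sub_comm (y k - y j)]
  linarith [abs_sub_abs_le_abs_sub (x k - x j) (y k - y j)]

theorem abs_combo_sub_le_of_wcovBy [LinearOrder ι] (hx : StrictMono x) (y : ι → ℝ) {p q : ι}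
    (hpq : p ⩿ q) (j : ι) {u w : ℝ} (hu : 0 ≤ u) (hw : 0 ≤ w) (huw : u + w = 1) :
    |u * y p + w * y q - y j| ≤
      (1 + (relError x y j p + relError x y j q)) * |u * x p + w * x q - x j| := by
  have hp := relError_nonneg x y j p
  have hq := relError_nonneg x y j q
  calc |u * y p + w * y q - y j|
      = |u * (y p - y j) + w * (y q - y j)| := by
        congr 1
        linear_combination y j * huw
    _ ≤ u * |y p - y j| + w * |y q - y j| := by
        simpa only [abs_mul, abs_of_nonneg hu, abs_of_nonneg hw] using
          abs_add_le (u * (y p - y j)) (w * (y q - y j))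
    _ ≤ u * ((1 + relError x y j p) * |x p - x j|) +
          w * ((1 + relError x y j q) * |x q - x j|) := by
        gcongr <;> exact abs_sub_le_one_add_relError_mul hx.injective y j _
    _ ≤ u * ((1 + (relError x y j p + relError x y j q)) * |x p - x j|) +
          w * ((1 + (relError x y j p + relError x y j q)) * |x q - x j|) := by
        gcongr <;> linarith
    _ = (1 + (relError x y j p + relError x y j q)) * |u * x p + w * x q - x j| := by
        rw [abs_combo_sub_of_wcovBy hx.monotone hpq j hu hw huw]
        ring

theorem exists_mem_Icc_abs_sub_le [LinearOrder ι] [Finite ι] (hx : StrictMono x) {a b : ι}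
    (hab : a ≤ b) {s : ℝ} (hs : s ∈ Set.Icc (y a) (y b)) :
    ∃ t ∈ Set.Icc (x a) (x b), ∃ p q, ∀ j,
      |s - y j| ≤ (1 + (relError x y j p + relError x y j q)) * |t - x j| := by
  obtain ⟨p, q, hap, hqb, hpq, hspq⟩ := exists_wcovBy_mem_Icc y hab hs
  rw [← segment_eq_Icc (hspq.1.trans hspq.2)] at hspq
  obtain ⟨u, w, hu, hw, huw, rfl⟩ := hspq
  have hp : x p ∈ Set.Icc (x a) (x b) := ⟨hx.monotone hap, hx.monotone (hpq.le.trans hqb)⟩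
  have hq : x q ∈ Set.Icc (x a) (x b) := ⟨hx.monotone (hap.trans hpq.le), hx.monotone hqb⟩
  exact ⟨u * x p + w * x q, convex_Icc _ _ hp hq hu hw huw, p, q,
    fun j => abs_combo_sub_le_of_wcovBy hx y hpq j hu hw huw⟩

theorem sum_relError_eq_sum_abs_rjk {n : ℕ} {x : Fin (n + 1) → ℝ} (hx : Injective x)
    (xh : Fin (n + 1) → ℝ) (k : Fin (n + 1)) :
    ∑ j, relError x xh j k = ∑ j ∈ univ.erase k, |rjk x xh j k| := by
  rw [← sum_erase (a := k) univ (by simp [relError])]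
  refine sum_congr rfl fun j hj => ?_
  have hsub : x k - x j ≠ 0 := sub_ne_zero.2 (hx.ne (ne_of_mem_erase hj).symm)
  rw [relError, rjk, ← abs_div, sub_div, div_self hsub]

end RelError

section LebesgueConstant

variable {ι : Type*} [DecidableEq ι]

theorem abs_eval_basis_eq_prod (s : Finset ι) (v : ι → ℝ) (k : ι) (t : ℝ) :
    |(Lagrange.basis s v k).eval t| = ∏ j ∈ s.erase k, |t - v j| / |v k - v j| := by
  rw [Lagrange.basis, Polynomial.eval_prod, abs_prod]
  simp [Lagrange.basisDivisor, abs_mul, abs_inv, div_eq_inv_mul]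

theorem one_sub_sum_mul_abs_eval_basis_le {S : Finset ι} {x y a b : ι → ℝ} (hx : Injective x)
    (k : ι) {s t : ℝ} (ha : ∀ j, 0 ≤ a j) (hb : ∀ j, 0 ≤ b j) (hab : ∑ j ∈ S, (a j + b j) < 1)
    (hnum : ∀ j, |s - y j| ≤ (1 + a j) * |t - x j|)
    (hden : ∀ j, (1 - b j) * |x k - x j| ≤ |y k - y j|) :
    (1 - ∑ j ∈ S, (a j + b j)) * |(Lagrange.basis S y k).eval s| ≤
      |(Lagrange.basis S x k).eval t| := by
  have hnonneg (j : ι) : 0 ≤ a j + b j := add_nonneg (ha j) (hb j)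
  have hlt : ∀ j ∈ S.erase k, a j + b j < 1 := fun j hj =>
    (single_le_sum (fun i _ => hnonneg i) (mem_of_mem_erase hj)).trans_lt hab
  have hsum : ∑ j ∈ S.erase k, (a j + b j) ≤ ∑ j ∈ S, (a j + b j) :=
    sum_le_sum_of_subset_of_nonneg (erase_subset k S) fun j _ _ => hnonneg j
  simp only [abs_eval_basis_eq_prod]
  calc (1 - ∑ j ∈ S, (a j + b j)) * ∏ j ∈ S.erase k, |s - y j| / |y k - y j|
      ≤ (∏ j ∈ S.erase k, (1 - (a j + b j))) * ∏ j ∈ S.erase k, |s - y j| / |y k - y j| := by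
        gcongr
        exact (sub_le_sub_left hsum 1).trans
          (one_sub_sum_le_prod_one_sub _ (fun j _ => hnonneg j) fun j hj => (hlt j hj).le)
    _ = ∏ j ∈ S.erase k, (1 - (a j + b j)) * (|s - y j| / |y k - y j|) :=
        prod_mul_distrib.symm
    _ ≤ ∏ j ∈ S.erase k, |t - x j| / |x k - x j| := by
        refine prod_le_prod
          (fun j hj => mul_nonneg (sub_nonneg.2 (hlt j hj).le) (by positivity)) fun j hj => ?_
        have hkj : 0 < |x k - x j| :=
          abs_pos.2 (sub_ne_zero.2 (hx.ne (ne_of_mem_erase hj).symm))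
        exact one_sub_add_mul_div_le_div (ha j) (hb j) (hlt j hj) (abs_nonneg _) hkj
          (hnum j) (hden j)

variable [Fintype ι]

theorem leb_nonneg (v : ι → ℝ) (a b : ℝ) : 0 ≤ leb v a b :=
  Real.iSup_nonneg fun _ => sum_nonneg fun _ _ => abs_nonneg _

theorem sum_abs_eval_basis_le_leb (v : ι → ℝ) {a b t : ℝ} (ht : t ∈ Set.Icc a b) :
    ∑ k, |(Lagrange.basis Finset.univ v k).eval t| ≤ leb v a b := by
  have hbdd : BddAbove (Set.range fun t : Set.Icc a b =>
      ∑ k, |(Lagrange.basis Finset.univ v k).eval (t : ℝ)|) :=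
    (isCompact_range (by fun_prop)).bddAbove
  exact le_ciSup hbdd ⟨t, ht⟩

theorem mul_leb_le_leb {x y : ι → ℝ} {a b c d C : ℝ} (hC : 0 < C)
    (h : ∀ s ∈ Set.Icc a b, ∃ t ∈ Set.Icc c d, ∀ k,
      C * |(Lagrange.basis Finset.univ y k).eval s| ≤
        |(Lagrange.basis Finset.univ x k).eval t|) :
    C * leb y a b ≤ leb x c d := by
  rw [← le_div_iff₀' hC]
  refine Real.iSup_le (fun ⟨s, hs⟩ => ?_) (div_nonneg (leb_nonneg x c d) hC.le)
  obtain ⟨t, ht, hst⟩ := h s hs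
  rw [le_div_iff₀' hC, mul_sum]
  exact (sum_le_sum fun k _ => hst k).trans (sum_abs_eval_basis_le_leb x ht)

end LebesgueConstant

section Perturbation

variable {ι : Type*} [LinearOrder ι] [Fintype ι] {x y : ι → ℝ} {a b : ι} {δ : ℝ}

theorem one_sub_three_mul_leb_le_leb (hx : StrictMono x) (hab : a ≤ b)
    (hδ : ∀ k, ∑ j, relError x y j k ≤ δ) (hδ_lt : 3 * δ < 1) :
    (1 - 3 * δ) * leb y (y a) (y b) ≤ leb x (x a) (x b) := by
  refine mul_leb_le_leb (sub_pos.2 hδ_lt) fun s hs => ?_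
  obtain ⟨t, ht, p, q, hst⟩ := exists_mem_Icc_abs_sub_le hx hab hs
  refine ⟨t, ht, fun k => ?_⟩
  have hsum : ∑ j, (relError x y j p + relError x y j q + relError x y j k) ≤ 3 * δ := by
    simp only [sum_add_distrib]
    linarith [hδ p, hδ q, hδ k]
  refine le_trans (by gcongr) (one_sub_sum_mul_abs_eval_basis_le hx.injective k
    (fun j => add_nonneg (relError_nonneg x y j p) (relError_nonneg x y j q))
    (fun j => relError_nonneg x y j k) (hsum.trans_lt hδ_lt) hst
    fun j => one_sub_relError_mul_le_abs_sub hx.injective y j k)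

theorem stmt_2_general (hx : StrictMono x) (hab : a ≤ b)
    (hδ : ∀ k, ∑ j, relError x y j k ≤ δ) (hδ_le : δ ≤ 1 / 12) :
    leb y (y a) (y b) ≤ (1 + 4 * δ) * leb x (x a) (x b) := by
  have hδ₀ : 0 ≤ δ := (sum_nonneg fun j _ => relError_nonneg x y j a).trans (hδ a)
  have hfactor : 1 ≤ (1 + 4 * δ) * (1 - 3 * δ) := by nlinarith
  calc leb y (y a) (y b) ≤ (1 + 4 * δ) * (1 - 3 * δ) * leb y (y a) (y b) :=
        le_mul_of_one_le_left (leb_nonneg y _ _) hfactor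
    _ = (1 + 4 * δ) * ((1 - 3 * δ) * leb y (y a) (y b)) := mul_assoc _ _ _
    _ ≤ (1 + 4 * δ) * leb x (x a) (x b) := by
        gcongr
        exact one_sub_three_mul_leb_le_leb hx hab hδ (by linarith)

end Perturbation

theorem stmt_2 {n : ℕ} (x xh : Fin (n + 1) → ℝ)
    (hx : StrictMono x) (hxh : StrictMono xh)
    (h0 : xh 0 = x 0) (hn : xh (Fin.last n) = x (Fin.last n))
    (δ : ℝ)
    (hδ : δ = Finset.univ.sup' Finset.univ_nonempty fun k =>
      ∑ j ∈ Finset.univ.erase k, |rjk x xh j k|)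
    (hδ1 : δ < 0.01)
    (hclose : ∀ k j i : Fin (n + 1), j ≠ i → |xh k - x k| ≤ 0.1 * |x j - x i|) :
    leb xh (x 0) (x (Fin.last n)) ≤ (1 + 4 * δ) * leb x (x 0) (x (Fin.last n)) := by
  have hsum (k : Fin (n + 1)) : ∑ j, relError x xh j k ≤ δ := by
    rw [sum_relError_eq_sum_abs_rjk hx.injective, hδ]
    exact le_sup' (fun k => ∑ j ∈ Finset.univ.erase k, |rjk x xh j k|) (mem_univ k)
  simpa only [h0, hn] using stmt_2_general hx (Fin.zero_le (Fin.last n)) hsum (by linarith)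
end

section
/- Let x₀ < ⋯ < xₙ be real nodes, let x̂₀ = x₀ < x̂₁ < ⋯ < x̂_{n−1} < x̂ₙ = xₙ, and let y ∈ ℝ^{n+1}. Then for every real t distinct from all x̂_k, the first barycentric formula with nodes x̂ and exact weights λ(x) satisfies p(t; x̂, y, λ(x)) = P_{y + yz}(t) = P_y(t) + P_{yz}(t), where z_k = z_k(x, x̂). -/
/-- The first barycentric formula `p(t; x̂, y, w)`. -/
noncomputable def firstForm {n : ℕ} (xh y w : Fin (n + 1) → ℝ) (t : ℝ) : ℝ :=
  (∏ k, (t - xh k)) * ∑ k, w k * y k / (t - xh k)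

/-!
Away from the nodes, the interpolant of given values is the first barycentric formula with the exact
weights `λ_i` of those nodes. Using weights `λ_i (1 + z_i)` instead is therefore the same as keeping
the exact weights and multiplying the `i`-th value by `1 + z_i`. The sum `P_y + P_{yz}` then comes
from linearity of interpolation in the values.
-/

section BarycentricForm

open Finset Lagrange

variable {F ι : Type*} [Field F] {s : Finset ι} {v : ι → F} {t : F}

/-- The first barycentric formula over a field, with nodes `v i` for `i ∈ s`, values `y` and
arbitrary weights `w`. It is meaningful only for `t` off the nodes: at a node its value is `0`. -/
def barycentricForm (s : Finset ι) (v y w : ι → F) (t : F) : F :=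
  (∏ i ∈ s, (t - v i)) * ∑ i ∈ s, w i * y i / (t - v i)

variable [DecidableEq ι]

/-- The relative error of the weights `w` with respect to the exact barycentric weights of the
nodes `v i`, `i ∈ s`. -/
def relWeightError (s : Finset ι) (v w : ι → F) (i : ι) : F :=
  (w i - nodalWeight s v i) / nodalWeight s v i

lemma nodalWeight_mul_one_add_relWeightError (hv : Set.InjOn v s) {i : ι} (hi : i ∈ s)
    (w : ι → F) : nodalWeight s v i * (1 + relWeightError s v w i) = w i := by
  rw [relWeightError, mul_one_add, mul_div_cancel₀ _ (nodalWeight_ne_zero hv hi),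
    add_sub_cancel]

lemma eval_interpolate_eq_barycentricForm (ht : ∀ i ∈ s, t ≠ v i) (y : ι → F) :
    (interpolate s v y).eval t = barycentricForm s v y (nodalWeight s v) t := by
  simp only [barycentricForm, eval_interpolate_not_at_node y ht, eval_nodal, div_eq_mul_inv,
    mul_right_comm]

lemma barycentricForm_eq_eval_interpolate (hv : Set.InjOn v s) (ht : ∀ i ∈ s, t ≠ v i)
    (y w : ι → F) :
    barycentricForm s v y w t =
      (interpolate s v fun i => y i + y i * relWeightError s v w i).eval t := by
  rw [eval_interpolate_eq_barycentricForm ht, barycentricForm, barycentricForm]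
  congr 1
  refine sum_congr rfl fun i hi => ?_
  rw [← mul_one_add, mul_left_comm, nodalWeight_mul_one_add_relWeightError hv hi, mul_comm]

theorem stmt_3_general (hv : Set.InjOn v s) (ht : ∀ i ∈ s, t ≠ v i) (y w : ι → F) :
    barycentricForm s v y w t =
        (interpolate s v fun i => y i + y i * relWeightError s v w i).eval t ∧
      barycentricForm s v y w t =
        (interpolate s v y).eval t +
          (interpolate s v fun i => y i * relWeightError s v w i).eval t := by
  have hform := barycentricForm_eq_eval_interpolate hv ht y w
  refine ⟨hform, ?_⟩
  rw [hform, ← Polynomial.eval_add, ← map_add, Pi.add_def]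

end BarycentricForm

lemma lam_eq_nodalWeight {n : ℕ} (x : Fin (n + 1) → ℝ) :
    lam x = Lagrange.nodalWeight Finset.univ x := by
  funext k
  rw [lam, Lagrange.nodalWeight, Finset.prod_inv_distrib]

lemma zk_eq_relWeightError {n : ℕ} (x xh : Fin (n + 1) → ℝ) :
    zk x xh = relWeightError Finset.univ xh (lam x) := by
  funext k
  rw [zk, relWeightError, lam_eq_nodalWeight xh]

theorem stmt_3 {n : ℕ} (x xh y : Fin (n + 1) → ℝ)
    (hx : StrictMono x) (hxh : StrictMono xh)
    (h0 : xh 0 = x 0) (hn : xh (Fin.last n) = x (Fin.last n))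
    (t : ℝ) (ht : ∀ k, t ≠ xh k) :
    firstForm xh y (lam x) t =
        (Lagrange.interpolate Finset.univ xh (fun k => y k + y k * zk x xh k)).eval t ∧
      firstForm xh y (lam x) t =
        (Lagrange.interpolate Finset.univ xh y).eval t +
          (Lagrange.interpolate Finset.univ xh (fun k => y k * zk x xh k)).eval t := by
  rw [zk_eq_relWeightError]
  exact stmt_3_general hxh.injective.injOn (fun k _ => ht k) y (lam x)
end

section
/- Let x̂₀ < ⋯ < x̂ₙ be real nodes, let z ∈ ℝ^{n+1}, let ĉ_k := (x̂_{k−1} + x̂_k)/2, and set a_{k,j} := (z_j − P_z(ĉ_k))·ℓ_j(ĉ_k). Let L ≥ 0 and suppose y ∈ ℝ^{n+1} satisfies |y_j − y_{j−1}| ≤ L·(x̂_j − x̂_{j−1}) for 1 ≤ j ≤ n. Then for each k ∈ {1, …, n}, |E(ĉ_k; y, z)| ≤ L·Σ_{i=1}^n (x̂_i − x̂_{i−1})·|Σ_{j=i}^n a_{k,j}|. -/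
/-- The Error Polynomial `E(t; y, z) = P_{yz}(t) - P_y(t)·P_z(t)` for nodes `xh`. -/
noncomputable def errP {n : ℕ} (xh y z : Fin (n + 1) → ℝ) (t : ℝ) : ℝ :=
  (Lagrange.interpolate Finset.univ xh (fun k => y k * z k)).eval t -
    (Lagrange.interpolate Finset.univ xh y).eval t *
      (Lagrange.interpolate Finset.univ xh z).eval t

/-- The midpoints `ĉ_k = (x̂_{k-1} + x̂_k)/2`; `ch xh k` is the midpoint of the
interval `[x̂_k, x̂_{k+1}]`, i.e. `ĉ_{k+1}` for `k = 0, …, n-1`. -/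
noncomputable def ch {n : ℕ} (xh : Fin (n + 1) → ℝ) (k : Fin n) : ℝ :=
  (xh k.castSucc + xh k.succ) / 2

/-- The coefficients `a_{k,j} = (z_j − P_z(ĉ_k))·ℓ_j(ĉ_k)`, with `k : Fin n`
representing the index `k+1 ∈ {1, …, n}`. -/
noncomputable def coefA {n : ℕ} (xh z : Fin (n + 1) → ℝ) (k : Fin n) (j : Fin (n + 1)) : ℝ :=
  (z j - (Lagrange.interpolate Finset.univ xh z).eval (ch xh k)) *
    (Lagrange.basis Finset.univ xh j).eval (ch xh k)

/-!
Set `a_j = (z_j - P_z(t)) ℓ_j(t)`. Then `E(t; y, z) = ∑ j, y_j a_j`, and `∑ j, a_j = 0` because the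
`ℓ_j` sum to `1`. Hence the boundary term of Abel summation vanishes, and
`E(t; y, z) = ∑ i, (y_{i+1} - y_i) ∑ j > i, a_j` depends on `y` only through its increments.
-/

section AbelSummation

lemma sum_smul_eq_smul_sum_add_sum_sub_smul {R M : Type*} [Ring R] [AddCommGroup M] [Module R M]
    {n : ℕ} (y : Fin (n + 1) → R) (a : Fin (n + 1) → M) :
    ∑ j, y j • a j = y 0 • ∑ j, a j +
      ∑ i : Fin n, (y i.succ - y i.castSucc) • ∑ j ∈ Finset.Ioi i.castSucc, a j := by
  induction n with
  | zero => simp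
  | succ n ih =>
    have ih_tail := ih (fun j => y j.succ) (fun j => a j.succ)
    rw [Fin.sum_univ_succ, ih_tail, Fin.sum_univ_succ a, Fin.sum_univ_succ fun i : Fin (n + 1) =>
      (y i.succ - y i.castSucc) • ∑ j ∈ Finset.Ioi i.castSucc, a j]
    simp only [Fin.castSucc_zero, Fin.castSucc_succ, Fin.sum_Ioi_zero, Fin.sum_Ioi_succ,
      smul_add, sub_smul]
    abel

lemma abs_sum_mul_le_sum_mul_abs_sum_Ioi {R : Type*} [Ring R] [LinearOrder R]
    [IsOrderedRing R] {n : ℕ} {y a : Fin (n + 1) → R} {d : Fin n → R} (ha : ∑ j, a j = 0)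
    (hy : ∀ i : Fin n, |y i.succ - y i.castSucc| ≤ d i) :
    |∑ j, y j * a j| ≤ ∑ i : Fin n, d i * |∑ j ∈ Finset.Ioi i.castSucc, a j| := by
  have by_parts : ∑ j, y j * a j =
      ∑ i : Fin n, (y i.succ - y i.castSucc) * ∑ j ∈ Finset.Ioi i.castSucc, a j := by
    simpa only [smul_eq_mul, ha, mul_zero, zero_add] using
      sum_smul_eq_smul_sum_add_sum_sub_smul y a
  calc |∑ j, y j * a j|
      ≤ ∑ i : Fin n, |(y i.succ - y i.castSucc) * ∑ j ∈ Finset.Ioi i.castSucc, a j| :=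
        by_parts ▸ Finset.abs_sum_le_sum_abs _ _
    _ ≤ ∑ i : Fin n, d i * |∑ j ∈ Finset.Ioi i.castSucc, a j| := by
        simp only [abs_mul]
        gcongr with i
        exact hy i

end AbelSummation

section Interpolation

variable {F ι : Type*} [Field F] [DecidableEq ι] (s : Finset ι) (v : ι → F)

/-- The deviation of the datum `z_j` from the interpolated value `P_z(t)`, weighted by `ℓ_j(t)`, for
the nodes `v j`, `j ∈ s`. This is the coefficient `a_{k,j}` with an arbitrary evaluation point `t`
in place of the midpoint `ĉ_k`. -/
noncomputable def weightedDeviation (z : ι → F) (t : F) (j : ι) : F :=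
  (z j - (Lagrange.interpolate s v z).eval t) * (Lagrange.basis s v j).eval t

lemma eval_interpolate_eq_sum (r : ι → F) (t : F) :
    (Lagrange.interpolate s v r).eval t = ∑ j ∈ s, r j * (Lagrange.basis s v j).eval t := by
  simp only [Lagrange.interpolate_apply, Polynomial.eval_finsetSum, Polynomial.eval_mul,
    Polynomial.eval_C]

lemma eval_interpolate_mul_sub_eq_sum (y z : ι → F) (t : F) :
    (Lagrange.interpolate s v fun j => y j * z j).eval t -
        (Lagrange.interpolate s v y).eval t * (Lagrange.interpolate s v z).eval t =
      ∑ j ∈ s, y j * weightedDeviation s v z t j := by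
  rw [eval_interpolate_eq_sum s v fun j => y j * z j, eval_interpolate_eq_sum s v y,
    Finset.sum_mul, ← Finset.sum_sub_distrib]
  refine Finset.sum_congr rfl fun j _ => ?_
  rw [weightedDeviation]
  ring

variable {s v}

lemma sum_eval_basis (hv : Set.InjOn v s) (hs : s.Nonempty) (t : F) :
    ∑ j ∈ s, (Lagrange.basis s v j).eval t = 1 := by
  rw [← Polynomial.eval_finsetSum, Lagrange.sum_basis hv hs, Polynomial.eval_one]

lemma sum_weightedDeviation (hv : Set.InjOn v s) (z : ι → F) (t : F) :
    ∑ j ∈ s, weightedDeviation s v z t j = 0 := by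
  rcases s.eq_empty_or_nonempty with rfl | hs
  · exact Finset.sum_empty
  · simp only [weightedDeviation, sub_mul, Finset.sum_sub_distrib, ← Finset.mul_sum,
      sum_eval_basis hv hs, ← eval_interpolate_eq_sum, mul_one, sub_self]

end Interpolation

lemma filter_val_add_one_le_eq_Ioi {n : ℕ} (i : Fin n) :
    Finset.univ.filter (fun j : Fin (n + 1) => (i : ℕ) + 1 ≤ (j : ℕ)) =
      Finset.Ioi i.castSucc := by
  ext j
  simp [Fin.lt_def]

theorem stmt_8_general {K : Type*} [Field K] [LinearOrder K] [IsStrictOrderedRing K] {n : ℕ}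
    {v y : Fin (n + 1) → K} {d : Fin n → K} (hv : Function.Injective v)
    (hy : ∀ i : Fin n, |y i.succ - y i.castSucc| ≤ d i) (z : Fin (n + 1) → K) (t : K) :
    |(Lagrange.interpolate Finset.univ v fun j => y j * z j).eval t -
        (Lagrange.interpolate Finset.univ v y).eval t *
          (Lagrange.interpolate Finset.univ v z).eval t| ≤
      ∑ i : Fin n, d i *
        |∑ j ∈ Finset.Ioi i.castSucc, weightedDeviation Finset.univ v z t j| := by
  rw [eval_interpolate_mul_sub_eq_sum]
  exact abs_sum_mul_le_sum_mul_abs_sum_Ioi (sum_weightedDeviation hv.injOn z t) hy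

theorem stmt_8 {n : ℕ} (xh z y : Fin (n + 1) → ℝ) (hxh : StrictMono xh)
    (L : ℝ) (hL : 0 ≤ L)
    (hy : ∀ j : Fin n, |y j.succ - y j.castSucc| ≤ L * (xh j.succ - xh j.castSucc))
    (k : Fin n) :
    |errP xh y z (ch xh k)| ≤
      L * ∑ i : Fin n, (xh i.succ - xh i.castSucc) *
        |∑ j ∈ Finset.univ.filter (fun j : Fin (n + 1) => (i : ℕ) + 1 ≤ (j : ℕ)),
          coefA xh z k j| := by
  simp only [filter_val_add_one_le_eq_Ioi, Finset.mul_sum, ← mul_assoc]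
  exact stmt_8_general hxh.injective hy z (ch xh k)
end

section
/- Let v ∈ ℝⁿ satisfy ‖v‖₁ := Σ_{k=1}^n |v_k| < 1 and set s := Σ_{k=1}^n v_k. Then −(‖v‖₁²/(1 − ‖v‖₁)³)·(1 + ‖v‖₁²/4) ≤ ∏_{k=1}^n (1 + v_k) − (1 + s) ≤ s²/(1 − s). -/
/-!
With `s = ∑ v k` and `t = ∑ |v k|`, the product `∏ (1 + v k)` is at most `exp s`, and its terms of
degree at least two sum to at most `exp t - (1 + t)` in absolute value. Both bounds then follow from
`exp x ≤ 1 / (1 - x) = 1 + x + x ^ 2 / (1 - x)` for `x < 1`; the lower bound obtained in this way,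
`-t ^ 2 / (1 - t)`, is sharper than the one claimed.
-/

theorem exp_sub_one_add_le_sq_div_one_sub {x : ℝ} (hx : x < 1) :
    Real.exp x - (1 + x) ≤ x ^ 2 / (1 - x) := by
  have hpos : 0 < 1 - x := sub_pos.2 hx
  have hexp : Real.exp x ≤ (1 - x)⁻¹ := by
    rw [le_inv_comm₀ (Real.exp_pos x) hpos, ← Real.exp_neg]
    exact Real.one_sub_le_exp_neg x
  calc Real.exp x - (1 + x) ≤ (1 - x)⁻¹ - (1 + x) := sub_le_sub_right hexp _
    _ = x ^ 2 / (1 - x) := by field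

theorem sq_div_one_sub_le_sq_div_one_sub_cubed_mul {t : ℝ} (h0 : 0 ≤ t) (h1 : t < 1) :
    t ^ 2 / (1 - t) ≤ t ^ 2 / (1 - t) ^ 3 * (1 + t ^ 2 / 4) := by
  have hpos : 0 < 1 - t := sub_pos.2 h1
  have hcube : (1 - t) ^ 3 ≤ 1 - t :=
    pow_le_of_le_one hpos.le (sub_le_self 1 h0) three_ne_zero
  calc t ^ 2 / (1 - t) ≤ t ^ 2 / (1 - t) ^ 3 := by gcongr
    _ ≤ t ^ 2 / (1 - t) ^ 3 * (1 + t ^ 2 / 4) :=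
      le_mul_of_one_le_right (by positivity) (le_add_of_nonneg_right (by positivity))

section FinsetProd

variable {ι : Type*} (S : Finset ι)

theorem prod_one_add_le_exp_sum_of_neg_one_le {v : ι → ℝ} (hv : ∀ k ∈ S, -1 ≤ v k) :
    ∏ k ∈ S, (1 + v k) ≤ Real.exp (∑ k ∈ S, v k) := by
  rw [Real.exp_sum]
  refine Finset.prod_le_prod (fun k hk => neg_le_iff_add_nonneg'.1 (hv k hk)) fun k _ => ?_
  rw [add_comm]
  exact Real.add_one_le_exp (v k)

theorem norm_prod_one_add_sub_one_add_sum_le {R : Type*} [NormedCommRing R] [NormOneClass R]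
    (f : ι → R) :
    ‖∏ k ∈ S, (1 + f k) - (1 + ∑ k ∈ S, f k)‖ ≤
      Real.exp (∑ k ∈ S, ‖f k‖) - (1 + ∑ k ∈ S, ‖f k‖) := by
  classical
  induction S using Finset.induction_on with
  | empty => simp
  | insert a S ha ih =>
    rw [Finset.prod_insert ha, Finset.sum_insert ha, Finset.sum_insert ha, Real.exp_add]
    have hprod := S.norm_prod_one_add_sub_one_le f
    set P := ∏ k ∈ S, (1 + f k)
    set s := ∑ k ∈ S, f k
    set t := ∑ k ∈ S, ‖f k‖
    calc ‖(1 + f a) * P - (1 + (f a + s))‖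
        = ‖(P - (1 + s)) + f a * (P - 1)‖ := by ring_nf
      _ ≤ ‖P - (1 + s)‖ + ‖f a‖ * ‖P - 1‖ := norm_add_le_of_le le_rfl (norm_mul_le _ _)
      _ ≤ (Real.exp t - (1 + t)) + ‖f a‖ * (Real.exp t - 1) := by gcongr
      _ = (‖f a‖ + 1) * Real.exp t - (1 + (‖f a‖ + t)) := by ring
      _ ≤ Real.exp ‖f a‖ * Real.exp t - (1 + (‖f a‖ + t)) := by
        gcongr
        exact Real.add_one_le_exp _

theorem stmt_13_general (v : ι → ℝ) (h1 : ∑ k ∈ S, |v k| < 1) :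
    -((∑ k ∈ S, |v k|) ^ 2 / (1 - ∑ k ∈ S, |v k|)) ≤
        (∏ k ∈ S, (1 + v k)) - (1 + ∑ k ∈ S, v k) ∧
      (∏ k ∈ S, (1 + v k)) - (1 + ∑ k ∈ S, v k) ≤
        (∑ k ∈ S, v k) ^ 2 / (1 - ∑ k ∈ S, v k) := by
  have hs : ∑ k ∈ S, v k < 1 := (Finset.sum_le_sum fun k _ => le_abs_self (v k)).trans_lt h1
  have hv : ∀ k ∈ S, -1 ≤ v k := fun k hk =>
    neg_le_of_abs_le ((Finset.single_le_sum (fun i _ => abs_nonneg (v i)) hk).trans h1.le)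
  constructor
  · exact neg_le_of_abs_le <| (norm_prod_one_add_sub_one_add_sum_le S v).trans
      (exp_sub_one_add_le_sq_div_one_sub h1)
  · exact (sub_le_sub_right (prod_one_add_le_exp_sum_of_neg_one_le S hv) _).trans
      (exp_sub_one_add_le_sq_div_one_sub hs)

end FinsetProd

theorem stmt_13 {n : ℕ} (v : Fin n → ℝ) (h1 : ∑ k, |v k| < 1) :
    -((∑ k, |v k|) ^ 2 / (1 - ∑ k, |v k|) ^ 3) * (1 + (∑ k, |v k|) ^ 2 / 4) ≤
        (∏ k, (1 + v k)) - (1 + ∑ k, v k) ∧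
      (∏ k, (1 + v k)) - (1 + ∑ k, v k) ≤ (∑ k, v k) ^ 2 / (1 - ∑ k, v k) := by
  refine (stmt_13_general Finset.univ v h1).imp_left fun hlower => le_trans ?_ hlower
  rw [neg_mul, neg_le_neg_iff]
  exact sq_div_one_sub_le_sq_div_one_sub_cubed_mul
    (Finset.sum_nonneg fun k _ => abs_nonneg (v k)) h1
end

section
/- Let n ≥ 2 and let x_j = −cos(jπ/n) be the Chebyshev points of the second kind. Then for every integer k with 1 ≤ k ≤ n/2, Σ_{j=0}^{k−1} 1/(x_k − x_j) ≤ (1 + k·log(4k − 1))/(2·sin(kπ/n)·sin(kπ/(2n))) ≤ (n²/(4√2·k²))·(1 + k·log(4k − 1)), where log is the natural logarithm. -/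
/-!
Put `θ = kπ/n` and `t = j/k`. Then
`x_k - x_j = cos (tθ) - cos θ = 2 sin ((1 + t)/2 · θ) sin ((1 - t) · θ/2)`, and concavity of `sin`
on `[0, π]` pulls the factors `(1 + t)/2` and `1 - t` out of the two sines. Hence `1/(x_k - x_j)` is
at most `1/((1 - t²) sin θ sin (θ/2))`, and splitting `1/(1 - t²)` into partial fractions turns the
sum over `j < k` into `(1 + k H_{2k-1})/(2 sin θ sin (θ/2))`, where `H_m ≤ log (2m + 1)`. The second
bound compares `θ` with `π/2` and `θ/2` with `π/4`, again by concavity.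
-/

section

open Real Finset

lemma harmonic_add_eq_harmonic_add_sum (m l : ℕ) :
    harmonic (m + l) = harmonic m + ∑ j ∈ range l, ((m : ℚ) + (j + 1))⁻¹ := by
  simp only [harmonic, sum_range_add, Nat.cast_add, Nat.cast_one, add_assoc]

lemma sum_range_inv_sub_eq_harmonic (k : ℕ) :
    ∑ j ∈ range k, ((k : ℚ) - j)⁻¹ = harmonic k := by
  rw [harmonic, ← sum_range_reflect (fun i : ℕ => ((i + 1 : ℕ) : ℚ)⁻¹)]
  refine sum_congr rfl fun j hj => ?_
  rw [show k - 1 - j + 1 = k - j by grind, Nat.cast_sub (mem_range.1 hj).le]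

-- The denominators are `1, …, k` and `k, …, 2k - 1`, so that `k` occurs twice.
lemma sum_range_inv_sub_add_inv_add_eq_harmonic (k : ℕ) :
    ∑ j ∈ range k, (((k : ℚ) - j)⁻¹ + ((k : ℚ) + j)⁻¹) = (k : ℚ)⁻¹ + harmonic (2 * k - 1) := by
  rcases k with _ | p
  · simp
  · rw [sum_add_distrib, sum_range_inv_sub_eq_harmonic, sum_range_succ',
      show 2 * (p + 1) - 1 = p + 1 + p by lia, harmonic_add_eq_harmonic_add_sum (p + 1)]
    push_cast
    ring

lemma harmonic_le_log_two_mul_add_one (m : ℕ) : (harmonic m : ℝ) ≤ log (2 * m + 1) := by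
  induction m with
  | zero => simp
  | succ m ih =>
    have inv_le_log_sub_log : ((m : ℝ) + 1)⁻¹ ≤ log (2 * (m + 1) + 1) - log (2 * m + 1) :=
      calc ((m : ℝ) + 1)⁻¹ = 2 * (2 / (2 * m + 1)) / (2 / (2 * m + 1) + 2) := by field_simp; ring
        _ ≤ log (1 + 2 / (2 * m + 1)) := le_log_one_add_of_nonneg (by positivity)
        _ = log ((2 * (m + 1) + 1) / (2 * m + 1)) := by congr 1; field_simp; ring
        _ = log (2 * (m + 1) + 1) - log (2 * m + 1) := log_div (by positivity) (by positivity)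
    rw [harmonic_succ]
    push_cast
    linarith

lemma sum_range_inv_sub_add_inv_add_le_log {k : ℕ} (hk : 1 ≤ k) :
    ∑ j ∈ range k, (((k : ℝ) - j)⁻¹ + ((k : ℝ) + j)⁻¹) ≤ (k : ℝ)⁻¹ + log (4 * k - 1) := by
  have sum_eq : ∑ j ∈ range k, (((k : ℝ) - j)⁻¹ + ((k : ℝ) + j)⁻¹) =
      (k : ℝ)⁻¹ + harmonic (2 * k - 1) := by
    simpa using congrArg (Rat.cast : ℚ → ℝ) (sum_range_inv_sub_add_inv_add_eq_harmonic k)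
  have log_arg : 2 * ((2 * k - 1 : ℕ) : ℝ) + 1 = 4 * k - 1 := by
    rw [Nat.cast_sub (by lia)]
    push_cast
    ring
  rw [sum_eq, ← log_arg]
  gcongr
  exact harmonic_le_log_two_mul_add_one _

lemma mul_sin_le_sin_mul {s θ : ℝ} (hs₀ : 0 ≤ s) (hs₁ : s ≤ 1) (hθ₀ : 0 ≤ θ) (hθ : θ ≤ π) :
    s * sin θ ≤ sin (s * θ) := by
  simpa using strictConcaveOn_sin_Icc.concaveOn.2 (x := θ) ⟨hθ₀, hθ⟩ (y := 0)
    ⟨le_rfl, pi_nonneg⟩ hs₀ (sub_nonneg.2 hs₁) (by ring)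

lemma one_sub_sq_mul_sin_mul_sin_half_le_cos_sub_cos {θ t : ℝ} (hθ₀ : 0 ≤ θ) (hθ : θ ≤ π)
    (ht₀ : 0 ≤ t) (ht : t ≤ 1) :
    (1 - t ^ 2) * (sin θ * sin (θ / 2)) ≤ cos (t * θ) - cos θ := by
  have sin_half_nonneg : 0 ≤ sin (θ / 2) :=
    sin_nonneg_of_nonneg_of_le_pi (by linarith) (by linarith)
  have sin_mid_nonneg : 0 ≤ sin ((1 + t) / 2 * θ) :=
    sin_nonneg_of_nonneg_of_le_pi (by positivity) (by nlinarith)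
  calc (1 - t ^ 2) * (sin θ * sin (θ / 2))
      = 2 * (((1 + t) / 2 * sin θ) * ((1 - t) * sin (θ / 2))) := by ring
    _ ≤ 2 * (sin ((1 + t) / 2 * θ) * sin ((1 - t) * (θ / 2))) := by
      gcongr 2 * ?_
      exact mul_le_mul (mul_sin_le_sin_mul (by linarith) (by linarith) hθ₀ hθ)
        (mul_sin_le_sin_mul (by linarith) (by linarith) (by linarith) (by linarith))
        (mul_nonneg (sub_nonneg.2 ht) sin_half_nonneg) sin_mid_nonneg
    _ = cos (t * θ) - cos θ := by
      rw [cos_sub_cos, show (t * θ + θ) / 2 = (1 + t) / 2 * θ by ring,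
        show (t * θ - θ) / 2 = -((1 - t) * (θ / 2)) by ring, sin_neg]
      ring

lemma sin_mul_sin_half_pos {θ : ℝ} (hθ₀ : 0 < θ) (hθ : θ < π) : 0 < sin θ * sin (θ / 2) :=
  mul_pos (sin_pos_of_pos_of_lt_pi hθ₀ hθ)
    (sin_pos_of_pos_of_lt_pi (by linarith) (by linarith))

lemma one_div_cos_sub_cos_le {θ j k : ℝ} (hθ₀ : 0 < θ) (hθ : θ < π) (hj : 0 ≤ j) (hjk : j < k) :
    1 / (cos (j / k * θ) - cos θ) ≤
      k / (2 * (sin θ * sin (θ / 2))) * ((k - j)⁻¹ + (k + j)⁻¹) := by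
  have hk : 0 < k := hj.trans_lt hjk
  have k_sub_j_pos : 0 < k - j := sub_pos.2 hjk
  have sin_prod_pos := sin_mul_sin_half_pos hθ₀ hθ
  have one_sub_sq : 1 - (j / k) ^ 2 = (k - j) * (k + j) / k ^ 2 := by field_simp; ring
  have lower_pos : 0 < (1 - (j / k) ^ 2) * (sin θ * sin (θ / 2)) := by
    rw [one_sub_sq]
    positivity
  calc 1 / (cos (j / k * θ) - cos θ)
      ≤ 1 / ((1 - (j / k) ^ 2) * (sin θ * sin (θ / 2))) :=
        one_div_le_one_div_of_le lower_pos
          (one_sub_sq_mul_sin_mul_sin_half_le_cos_sub_cos hθ₀.le hθ.le (by positivity)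
            (div_le_one_of_le₀ hjk.le hk.le))
    _ = k / (2 * (sin θ * sin (θ / 2))) * ((k - j)⁻¹ + (k + j)⁻¹) := by
        rw [one_sub_sq]
        have : 0 < k + j := by positivity
        field_simp
        ring

theorem sum_one_div_cos_sub_cos_le {θ : ℝ} (hθ₀ : 0 < θ) (hθ : θ < π) {k : ℕ} (hk : 1 ≤ k) :
    ∑ j ∈ range k, 1 / (cos (j / k * θ) - cos θ) ≤
      (1 + k * log (4 * k - 1)) / (2 * (sin θ * sin (θ / 2))) := by
  have sin_prod_pos := sin_mul_sin_half_pos hθ₀ hθ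
  calc ∑ j ∈ range k, 1 / (cos (j / k * θ) - cos θ)
      ≤ ∑ j ∈ range k,
          k / (2 * (sin θ * sin (θ / 2))) * (((k : ℝ) - j)⁻¹ + ((k : ℝ) + j)⁻¹) :=
        sum_le_sum fun j hj => one_div_cos_sub_cos_le hθ₀ hθ j.cast_nonneg
          (Nat.cast_lt.2 (mem_range.1 hj))
    _ ≤ k / (2 * (sin θ * sin (θ / 2))) * ((k : ℝ)⁻¹ + log (4 * k - 1)) := by
        rw [← mul_sum]
        gcongr
        exact sum_range_inv_sub_add_inv_add_le_log hk
    _ = (1 + k * log (4 * k - 1)) / (2 * (sin θ * sin (θ / 2))) := by field_simp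

lemma sqrt_two_mul_sq_le_sin_mul_sin_half {s : ℝ} (hs₀ : 0 ≤ s) (hs : s ≤ 1 / 2) :
    4 * √2 * s ^ 2 ≤ 2 * (sin (s * π) * sin (s * π / 2)) := by
  have two_mul_le_sin : 2 * s ≤ sin (s * π) := by
    have h := mul_le_sin (x := s * π) (by positivity) (by nlinarith [pi_pos])
    rwa [show 2 / π * (s * π) = 2 * s by field_simp] at h
  have sqrt_two_mul_le_sin_half : 2 * s * (√2 / 2) ≤ sin (s * π / 2) := by
    have h := mul_sin_le_sin_mul (s := 2 * s) (θ := π / 4) (by linarith) (by linarith)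
      (by positivity) (by linarith [pi_pos])
    rwa [sin_pi_div_four, show 2 * s * (π / 4) = s * π / 2 by ring] at h
  calc 4 * √2 * s ^ 2 = 2 * (2 * s * (2 * s * (√2 / 2))) := by ring
    _ ≤ 2 * (sin (s * π) * sin (s * π / 2)) := by
      have sin_nonneg : 0 ≤ sin (s * π) := by linarith
      gcongr

theorem stmt_14_general {n : ℝ} (x : ℕ → ℝ) (hx : ∀ j, x j = -cos (j * π / n))
    (k : ℕ) (hk : 1 ≤ k) (hkn : k < n) :
    ∑ j ∈ range k, 1 / (x k - x j) ≤
        (1 + k * log (4 * k - 1)) / (2 * sin (k * π / n) * sin (k * π / (2 * n))) ∧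
      (2 * k ≤ n →
        (1 + k * log (4 * k - 1)) / (2 * sin (k * π / n) * sin (k * π / (2 * n))) ≤
          n ^ 2 / (4 * √2 * k ^ 2) * (1 + k * log (4 * k - 1))) := by
  have one_le_k : (1 : ℝ) ≤ k := Nat.one_le_cast.2 hk
  have n_pos : 0 < n := by linarith
  have half_angle : k * π / (2 * n) = k / n * π / 2 := by field_simp
  rw [half_angle, mul_div_right_comm (k : ℝ) π n, mul_assoc 2]
  constructor
  · have sub_eq (j : ℕ) : x k - x j = cos (j / k * (k / n * π)) - cos (k / n * π) := by
      rw [hx, hx, mul_div_right_comm, show j * π / n = j / k * (k / n * π) by field_simp]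
      ring
    simp only [sub_eq]
    exact sum_one_div_cos_sub_cos_le (by positivity)
      (mul_lt_of_lt_one_left pi_pos ((div_lt_one n_pos).2 hkn)) hk
  · intro two_mul_k_le
    have log_term_nonneg : 0 ≤ log (4 * k - 1) := log_nonneg (by linarith)
    have sin_bound := sqrt_two_mul_sq_le_sin_mul_sin_half (s := k / n) (by positivity)
      ((div_le_div_iff₀ n_pos two_pos).2 (by linarith))
    calc _ ≤ (1 + k * log (4 * k - 1)) / (4 * √2 * (k / n) ^ 2) := by gcongr
      _ = n ^ 2 / (4 * √2 * k ^ 2) * (1 + k * log (4 * k - 1)) := by field_simp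

end

theorem stmt_14 {n : ℕ} (hn : 2 ≤ n) (x : ℕ → ℝ)
    (hx : ∀ j, x j = -Real.cos (j * Real.pi / n))
    (k : ℕ) (hk1 : 1 ≤ k) (hk2 : 2 * k ≤ n) :
    (∑ j ∈ Finset.range k, 1 / (x k - x j)) ≤
        (1 + k * Real.log (4 * k - 1)) /
          (2 * Real.sin (k * Real.pi / n) * Real.sin (k * Real.pi / (2 * n))) ∧
      (1 + k * Real.log (4 * k - 1)) /
          (2 * Real.sin (k * Real.pi / n) * Real.sin (k * Real.pi / (2 * n))) ≤
        n ^ 2 / (4 * Real.sqrt 2 * k ^ 2) * (1 + k * Real.log (4 * k - 1)) :=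
  (stmt_14_general x hx k hk1 (Nat.cast_lt.2 (by lia))).imp_right fun h => h (mod_cast hk2)
end

section
/- Let n ≥ 2 and let x_j = −cos(jπ/n) be the Chebyshev points of the second kind. Then for every integer k with 1 ≤ k ≤ n/2, Σ_{j=k+1}^{n} 1/(x_j − x_k) ≤ (3n²/(4√2·k))·log(4k + 1), where log is the natural logarithm. -/
/-!
Since `cos a - cos b = 2 sin ((a + b) / 2) sin ((b - a) / 2)`, concavity of the sine on `[0, π]`
bounds `cos a - cos b` below by a multiple of `b ^ 2 - a ^ 2`. At the Chebyshev points this reads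
`x j - x k ≥ (2√2 / 3) (j ^ 2 - k ^ 2) / n ^ 2`, the constant coming from the chord of the sine over
`[0, 3π/4]`, where `(a + b) / 2` lies because `2k ≤ n`. The partial fractions
`2k / (j ^ 2 - k ^ 2) = 1 / (j - k) - 1 / (j + k)` telescope, so the sum of the reciprocals of
`j ^ 2 - k ^ 2` over `j > k` is at most `H_{2k} / (2k)`, and `H_m ≤ log (2m + 1)`.
-/

open Real Finset

lemma monotone_harmonic : Monotone harmonic :=
  monotone_nat_of_le_succ fun n => by
    rw [harmonic_succ]
    exact le_add_of_nonneg_right (by positivity)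

lemma one_div_add_one_le_log_sub_log {t : ℝ} (ht : 0 ≤ t) :
    1 / (t + 1) ≤ log (2 * t + 3) - log (2 * t + 1) := by
  have h_ratio : (2 * t + 3) / (2 * t + 1) = 1 + 2 / (2 * t + 1) := by
    field_simp
    ring
  rw [← log_div (by positivity) (by positivity), h_ratio]
  calc 1 / (t + 1) = 2 * (2 / (2 * t + 1)) / (2 / (2 * t + 1) + 2) := by
        field_simp
        ring
    _ ≤ log (1 + 2 / (2 * t + 1)) := le_log_one_add_of_nonneg (by positivity)

lemma sum_Icc_one_div_sq_sub_sq {k n : ℕ} (hk : k ≠ 0) (hkn : k ≤ n) :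
    ∑ j ∈ Icc (k + 1) n, 1 / ((j : ℚ) ^ 2 - k ^ 2) =
      (harmonic (2 * k) + harmonic (n - k) - harmonic (n + k)) / (2 * k) := by
  have hk₀ : (k : ℚ) ≠ 0 := mod_cast hk
  induction n, hkn using Nat.le_induction with
  | base => simp [two_mul]
  | succ n hkn ih =>
    have hkn' : (k : ℚ) ≤ n := mod_cast hkn
    have h_sub : (n + 1 - k : ℚ) ≠ 0 := by linarith
    have h_add : (n + 1 + k : ℚ) ≠ 0 := by positivity
    have h_partial_fractions : 1 / ((n + 1 : ℚ) ^ 2 - k ^ 2) =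
        ((n + 1 - k : ℚ)⁻¹ - (n + 1 + k : ℚ)⁻¹) / (2 * k) := by
      rw [show (n + 1 : ℚ) ^ 2 - k ^ 2 = (n + 1 - k) * (n + 1 + k) by ring]
      field_simp
      ring
    rw [sum_Icc_succ_top (by lia), ih, Nat.sub_add_comm hkn, Nat.add_right_comm n 1 k,
      harmonic_succ, harmonic_succ]
    push_cast [hkn]
    rw [h_partial_fractions, sub_add_eq_add_sub (n : ℚ) k 1, add_right_comm (n : ℚ) k 1]
    ring

lemma sum_Icc_one_div_sq_sub_sq_le {k n : ℕ} (hk : k ≠ 0) (hkn : k ≤ n) :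
    ∑ j ∈ Icc (k + 1) n, 1 / ((j : ℝ) ^ 2 - k ^ 2) ≤ log (4 * k + 1) / (2 * k) := by
  have h_harmonic : ∑ j ∈ Icc (k + 1) n, 1 / ((j : ℚ) ^ 2 - k ^ 2) ≤
      harmonic (2 * k) / (2 * k) := by
    rw [sum_Icc_one_div_sq_sub_sq hk hkn]
    gcongr
    linarith [monotone_harmonic (show n - k ≤ n + k by lia)]
  calc ∑ j ∈ Icc (k + 1) n, 1 / ((j : ℝ) ^ 2 - k ^ 2)
      ≤ (harmonic (2 * k) : ℝ) / (2 * k) := mod_cast h_harmonic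
    _ ≤ log (2 * (2 * k : ℕ) + 1) / (2 * k) := by
        gcongr
        exact harmonic_le_log_two_mul_add_one (2 * k)
    _ = log (4 * k + 1) / (2 * k) := by
        push_cast
        ring_nf

lemma mul_sin_le_mul_sin {x y : ℝ} (hx : 0 ≤ x) (hxy : x ≤ y) (hy : y ≤ π) :
    x * sin y ≤ y * sin x := by
  rcases (hx.trans hxy).eq_or_lt with rfl | hy₀
  · simp [le_antisymm hxy hx]
  have h_chord : x / y * sin y ≤ sin (x / y * y) := by
    simpa using strictConcaveOn_sin_Icc.concaveOn.2 (Set.left_mem_Icc.2 pi_nonneg) ⟨hy₀.le, hy⟩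
      (sub_nonneg.2 (div_le_one_of_le₀ hxy hy₀.le)) (div_nonneg hx hy₀.le)
      (sub_add_cancel 1 (x / y))
  rwa [div_mul_cancel₀ x hy₀.ne', div_mul_eq_mul_div, div_le_iff₀' hy₀] at h_chord

lemma sin_three_mul_pi_div_four : sin (3 * π / 4) = √2 / 2 := by
  rw [show 3 * π / 4 = π - π / 4 by ring, sin_pi_sub, sin_pi_div_four]

lemma mul_le_sin_of_le_three_mul_pi_div_four {x : ℝ} (hx : 0 ≤ x) (hx' : x ≤ 3 * π / 4) :
    2 * √2 / (3 * π) * x ≤ sin x := by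
  have h := mul_sin_le_mul_sin hx hx' (by linarith [pi_pos])
  rw [sin_three_mul_pi_div_four] at h
  rw [div_mul_eq_mul_div, div_le_iff₀ (by positivity)]
  linarith

lemma mul_sq_sub_sq_le_cos_sub_cos {a b : ℝ} (h_add : 0 ≤ a + b) (h_add' : a + b ≤ 3 * π / 2)
    (h_sub : 0 ≤ b - a) (h_sub' : b - a ≤ π) :
    2 * √2 / (3 * π ^ 2) * (b ^ 2 - a ^ 2) ≤ cos a - cos b := by
  have h_sin_add : 2 * √2 / (3 * π) * ((a + b) / 2) ≤ sin ((a + b) / 2) :=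
    mul_le_sin_of_le_three_mul_pi_div_four (by linarith) (by linarith)
  have h_sin_sub : 2 / π * ((b - a) / 2) ≤ sin ((b - a) / 2) :=
    mul_le_sin (by linarith) (by linarith)
  calc 2 * √2 / (3 * π ^ 2) * (b ^ 2 - a ^ 2)
      = 2 * ((2 * √2 / (3 * π) * ((a + b) / 2)) * (2 / π * ((b - a) / 2))) := by
        field_simp
        ring
    _ ≤ 2 * (sin ((a + b) / 2) * sin ((b - a) / 2)) := by
        gcongr
        exact sin_nonneg_of_nonneg_of_le_pi (by linarith) (by linarith [pi_pos])
    _ = cos a - cos b := by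
        rw [cos_sub_cos, ← neg_sub b a, neg_div, sin_neg]
        ring

lemma one_div_cos_sub_cos_le_s15 {n s t : ℝ} (hs : 0 ≤ s) (hst : s < t) (htn : t ≤ n)
    (hsn : 2 * s ≤ n) :
    1 / (cos (s * π / n) - cos (t * π / n)) ≤
      3 * n ^ 2 / (2 * √2) * (1 / (t ^ 2 - s ^ 2)) := by
  have hn : 0 < n := by linarith
  have h_sq : 0 < t ^ 2 - s ^ 2 := by nlinarith
  have h_gap : 2 * √2 / (3 * n ^ 2) * (t ^ 2 - s ^ 2) ≤ cos (s * π / n) - cos (t * π / n) := by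
    refine le_of_eq_of_le ?_ (mul_sq_sub_sq_le_cos_sub_cos ?_ ?_ ?_ ?_)
    · field_simp
    · have := hs.trans hst.le
      positivity
    · rw [← add_div, div_le_iff₀ hn]
      nlinarith [pi_pos]
    · rw [← sub_div, ← sub_mul]
      have := sub_pos.2 hst
      positivity
    · rw [← sub_div, div_le_iff₀ hn]
      nlinarith [pi_pos]
  calc 1 / (cos (s * π / n) - cos (t * π / n))
      ≤ 1 / (2 * √2 / (3 * n ^ 2) * (t ^ 2 - s ^ 2)) := by gcongr
    _ = 3 * n ^ 2 / (2 * √2) * (1 / (t ^ 2 - s ^ 2)) := by field_simp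

theorem stmt_15 {n : ℕ} (hn : 2 ≤ n) (x : ℕ → ℝ)
    (hx : ∀ j, x j = -Real.cos (j * Real.pi / n))
    (k : ℕ) (hk1 : 1 ≤ k) (hk2 : 2 * k ≤ n) :
    (∑ j ∈ Finset.Icc (k + 1) n, 1 / (x j - x k)) ≤
      3 * n ^ 2 / (4 * Real.sqrt 2 * k) * Real.log (4 * k + 1) := by
  have h_term : ∀ j ∈ Icc (k + 1) n,
      1 / (x j - x k) ≤ 3 * n ^ 2 / (2 * √2) * (1 / ((j : ℝ) ^ 2 - k ^ 2)) := by
    intro j hj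
    obtain ⟨hkj, hjn⟩ := mem_Icc.1 hj
    rw [hx, hx, neg_sub_neg]
    exact one_div_cos_sub_cos_le_s15 k.cast_nonneg (mod_cast hkj) (mod_cast hjn) (mod_cast hk2)
  calc ∑ j ∈ Icc (k + 1) n, 1 / (x j - x k)
      ≤ 3 * n ^ 2 / (2 * √2) * ∑ j ∈ Icc (k + 1) n, 1 / ((j : ℝ) ^ 2 - k ^ 2) :=
        (sum_le_sum h_term).trans_eq (mul_sum ..).symm
    _ ≤ 3 * n ^ 2 / (2 * √2) * (log (4 * k + 1) / (2 * k)) := by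
        gcongr
        exact sum_Icc_one_div_sq_sub_sq_le (by lia) (by lia)
    _ = 3 * n ^ 2 / (4 * √2 * k) * log (4 * k + 1) := by
        field_simp
        ring
end

section
/- Let n ≥ 2 and let x_j = −cos(jπ/n) be the Chebyshev points of the second kind. Then for every integer k with 1 ≤ k ≤ n/2, Σ_{j≠k} 1/|x_k − x_j| ≤ (n²/(4√2))·(1 + log 3 + 3·log 5) < 1.3·n², where log is the natural logarithm. -/
/-!
The sum is in fact at most `n²`. Writing `cos α - cos β = 2 sin ((α + β) / 2) sin ((β - α) / 2)`,
Jordan's inequality `sin θ ≥ 2 θ / π` on `[0, π / 2]` bounds both factors from below when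
`j + k ≤ n`, giving `|x k - x j| ≥ 2 |j² - k²| / n²`. When `j + k > n`, the first factor is taken at
an angle in `[π / 2, 3π / 4]`, where the sine is at least `√2 / 2`, and `|x k - x j| ≥ √2 / n`.

The indices `j < k`, `k < j ≤ n - k` and `n - k < j ≤ n` contribute at most
`(n² / 2) · k / (2k - 1)`, `(n² / 2) · (3 / 4 - 1 / n)` and `k n / √2 ≤ 3 k n / 4`: the first
because `k² - j² ≥ 2k - 1`, the second because `j² - k² ≥ m (m + 2)` for `m = j - k`, which makes
the sum telescope. Together this is at most `n²`, while `6 ≤ 1 + log 3 + 3 log 5 = 1 + log 375 ≤ 7`.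
-/

open Real Finset
open Polynomial.Chebyshev (node)

lemma sqrt_two_div_two_le_sin {θ : ℝ} (h₁ : π / 4 ≤ θ) (h₂ : θ ≤ 3 * π / 4) :
    √2 / 2 ≤ sin θ := by
  rw [← cos_sub_pi_div_two, ← cos_abs, ← cos_pi_div_four]
  exact cos_le_cos_of_nonneg_of_le_pi (abs_nonneg _) (by linarith [pi_pos])
    (abs_le.mpr ⟨by linarith, by linarith⟩)

lemma cos_sub_cos_eq_two_mul_sin_mul_sin (α β : ℝ) :
    cos α - cos β = 2 * sin ((α + β) / 2) * sin ((β - α) / 2) := by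
  rw [cos_sub_cos, ← neg_sub β α, neg_div, sin_neg]
  ring

lemma two_div_pi_sq_mul_sq_sub_sq_le_cos_sub_cos {α β : ℝ} (hα : 0 ≤ α) (hαβ : α ≤ β)
    (hsum : α + β ≤ π) : 2 / π ^ 2 * (β ^ 2 - α ^ 2) ≤ cos α - cos β := by
  have hadd : 2 / π * ((α + β) / 2) ≤ sin ((α + β) / 2) := mul_le_sin (by linarith) (by linarith)
  have hsub : 2 / π * ((β - α) / 2) ≤ sin ((β - α) / 2) := mul_le_sin (by linarith) (by linarith)
  have hadd₀ : 0 ≤ (α + β) / 2 := by linarith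
  have hsin₀ : 0 ≤ sin ((α + β) / 2) := hadd.trans' (by positivity)
  calc 2 / π ^ 2 * (β ^ 2 - α ^ 2)
      = 2 * (2 / π * ((α + β) / 2)) * (2 / π * ((β - α) / 2)) := by ring
    _ ≤ 2 * sin ((α + β) / 2) * sin ((β - α) / 2) := by gcongr
    _ = cos α - cos β := (cos_sub_cos_eq_two_mul_sin_mul_sin α β).symm

lemma sqrt_two_div_pi_mul_sub_le_cos_sub_cos {α β : ℝ} (hαβ : α ≤ β) (hsub_le : β - α ≤ π)
    (h₁ : π / 2 ≤ α + β) (h₂ : α + β ≤ 3 * π / 2) :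
    √2 / π * (β - α) ≤ cos α - cos β := by
  have hadd : √2 / 2 ≤ sin ((α + β) / 2) := sqrt_two_div_two_le_sin (by linarith) (by linarith)
  have hsub : 2 / π * ((β - α) / 2) ≤ sin ((β - α) / 2) := mul_le_sin (by linarith) (by linarith)
  have hsin₀ : 0 ≤ sin ((α + β) / 2) := hadd.trans' (by positivity)
  calc √2 / π * (β - α) = 2 * (√2 / 2) * (2 / π * ((β - α) / 2)) := by ring
    _ ≤ 2 * sin ((α + β) / 2) * sin ((β - α) / 2) := by gcongr
    _ = cos α - cos β := (cos_sub_cos_eq_two_mul_sin_mul_sin α β).symm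

lemma sum_range_one_div_add_one_mul_add_three {K : Type*} [Field K] [CharZero K] (m : ℕ) :
    ∑ i ∈ range m, 1 / (((i : K) + 1) * (i + 3)) = 3 / 4 - (1 / (m + 1) + 1 / (m + 2)) / 2 := by
  induction m with
  | zero => norm_num
  | succ m ih =>
    have h₁ : (m : K) + 1 ≠ 0 := by exact_mod_cast m.succ_ne_zero
    have h₂ : (m : K) + 2 ≠ 0 := by exact_mod_cast (m + 1).succ_ne_zero
    have h₃ : (m : K) + 3 ≠ 0 := by exact_mod_cast (m + 2).succ_ne_zero
    rw [sum_range_succ, ih, Nat.cast_succ, show (m : K) + 1 + 1 = m + 2 by ring,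
      show (m : K) + 1 + 2 = m + 3 by ring]
    field_simp
    ring

lemma sum_range_erase_eq_add {M : Type*} [AddCommGroup M] (f : ℕ → M) (k m : ℕ) :
    ∑ j ∈ (range (k + 1 + m)).erase k, f j = ∑ j ∈ range k, f j + ∑ i ∈ range m, f (k + 1 + i) := by
  rw [sum_erase_eq_sub (mem_range.mpr (by lia)), sum_range_add, sum_range_succ]
  abel

lemma mul_sq_div_add_add_le_sq {n k : ℝ} (hk₁ : 1 ≤ k) (hk₂ : 2 * k ≤ n) :
    k * (n ^ 2 / (2 * (2 * k - 1))) + n ^ 2 / 2 * (3 / 4 - 1 / n) + k * (3 / 4 * n) ≤ n ^ 2 := by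
  have hn : 0 < n := by linarith
  have hnum : 0 ≤ n * (6 * k - 5) - (6 * k - 4) * (2 * k - 1) := by nlinarith
  have hfirst : k * (n ^ 2 / (2 * (2 * k - 1))) ≤ 5 / 8 * n ^ 2 + n / 2 - 3 / 4 * (k * n) := by
    rw [← mul_div_assoc, div_le_iff₀ (by linarith)]
    linarith [mul_nonneg hn.le hnum]
  have hsecond : n ^ 2 / 2 * (3 / 4 - 1 / n) = 3 / 8 * n ^ 2 - n / 2 := by
    field_simp
    ring
  linarith

section Node

variable {n i j k : ℕ}

lemma one_div_abs_node_sub_node_le_of_add_le (hij : i < j) (hadd : i + j ≤ n) :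
    1 / |node n i - node n j| ≤ n ^ 2 / (2 * ((j : ℝ) ^ 2 - i ^ 2)) := by
  have hn : (0 : ℝ) < n := by exact_mod_cast (show 0 < n by lia)
  have hij' : (i : ℝ) < j := by exact_mod_cast hij
  have hadd' : (i + j : ℝ) ≤ n := by exact_mod_cast hadd
  have hangle : i * π / n + j * π / n ≤ π := by
    rw [← add_div, ← add_mul, div_le_iff₀ hn, mul_comm π]
    gcongr
  have hsq : (0 : ℝ) < (j : ℝ) ^ 2 - i ^ 2 := sub_pos.mpr (by gcongr)
  have hgap : 2 * ((j : ℝ) ^ 2 - i ^ 2) / n ^ 2 ≤ node n i - node n j :=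
    calc 2 * ((j : ℝ) ^ 2 - i ^ 2) / n ^ 2
        = 2 / π ^ 2 * ((j * π / n) ^ 2 - (i * π / n) ^ 2) := by field_simp
      _ ≤ node n i - node n j :=
        two_div_pi_sq_mul_sq_sub_sq_le_cos_sub_cos (by positivity) (by gcongr) hangle
  rw [← one_div_div (_ * _)]
  exact one_div_le_one_div_of_le (by positivity) (hgap.trans (le_abs_self _))

lemma one_div_abs_node_sub_node_le_of_le_add (hij : i < j) (hsub : j ≤ n + i)
    (h₁ : n ≤ 2 * (i + j)) (h₂ : 2 * (i + j) ≤ 3 * n) :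
    1 / |node n i - node n j| ≤ n / √2 := by
  have hn : (0 : ℝ) < n := by exact_mod_cast (show 0 < n by lia)
  have hij' : (1 : ℝ) ≤ j - i := le_sub_iff_add_le'.mpr (by exact_mod_cast hij)
  have hsub' : (j : ℝ) ≤ n + i := by exact_mod_cast hsub
  have h₁' : (n : ℝ) ≤ 2 * (i + j) := by exact_mod_cast h₁
  have h₂' : 2 * (i + j : ℝ) ≤ 3 * n := by exact_mod_cast h₂
  have hangle : √2 / π * (j * π / n - i * π / n) ≤ node n i - node n j := by
    apply sqrt_two_div_pi_mul_sub_le_cos_sub_cos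
    · gcongr
    · rw [← sub_div, ← sub_mul, div_le_iff₀ hn]
      nlinarith [pi_pos]
    · rw [← add_div, ← add_mul, le_div_iff₀ hn]
      nlinarith [pi_pos]
    · rw [← add_div, ← add_mul, div_le_iff₀ hn]
      nlinarith [pi_pos]
  have hgap : √2 / n ≤ node n i - node n j :=
    calc √2 / n ≤ √2 / n * (j - i) := le_mul_of_one_le_right (by positivity) hij'
      _ = √2 / π * (j * π / n - i * π / n) := by field_simp
      _ ≤ node n i - node n j := hangle
  rw [← one_div_div √2]
  exact one_div_le_one_div_of_le (by positivity) (hgap.trans (le_abs_self _))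

lemma sum_range_one_div_abs_node_sub_node_le (hk : 2 * k ≤ n + 1) :
    ∑ j ∈ range k, 1 / |node n k - node n j| ≤ k * (n ^ 2 / (2 * (2 * k - 1))) := by
  have hterm : ∀ j ∈ range k, 1 / |node n k - node n j| ≤ n ^ 2 / (2 * (2 * k - 1)) := by
    intro j hj
    have hjk : j < k := mem_range.mp hj
    have hjk' : (j : ℝ) + 1 ≤ k := by exact_mod_cast hjk
    rw [abs_sub_comm]
    refine (one_div_abs_node_sub_node_le_of_add_le hjk (by lia)).trans ?_
    have hsq : 2 * (k : ℝ) - 1 ≤ k ^ 2 - j ^ 2 := by nlinarith [(j.cast_nonneg : (0 : ℝ) ≤ j)]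
    exact div_le_div_of_nonneg_left (by positivity) (by linarith) (by linarith)
  simpa only [card_range, nsmul_eq_mul] using sum_le_card_nsmul _ _ _ hterm

lemma sum_range_one_div_abs_node_sub_node_add_le {m : ℕ} (hk : 1 ≤ k) (hm : 2 * k + m ≤ n) :
    ∑ i ∈ range m, 1 / |node n k - node n (k + 1 + i)| ≤ n ^ 2 / 2 * (3 / 4 - 1 / n) := by
  have hk' : (1 : ℝ) ≤ k := by exact_mod_cast hk
  have hm' : (m : ℝ) + 2 ≤ n := by exact_mod_cast (show m + 2 ≤ n by lia)
  calc ∑ i ∈ range m, 1 / |node n k - node n (k + 1 + i)|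
      ≤ ∑ i ∈ range m, (n : ℝ) ^ 2 / 2 * (1 / ((i + 1) * (i + 3))) := by
        refine sum_le_sum fun i hi ↦ ?_
        have him : i < m := mem_range.mp hi
        refine (one_div_abs_node_sub_node_le_of_add_le (by lia) (by lia)).trans ?_
        rw [div_mul_div_comm, mul_one]
        gcongr
        push_cast
        nlinarith [(i.cast_nonneg : (0 : ℝ) ≤ i)]
    _ = n ^ 2 / 2 * (3 / 4 - (1 / (m + 1) + 1 / (m + 2)) / 2) := by
        rw [← mul_sum, sum_range_one_div_add_one_mul_add_three]
    _ ≤ n ^ 2 / 2 * (3 / 4 - 1 / n) := by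
        have h₁ : 1 / (n : ℝ) ≤ 1 / (m + 1) := by gcongr; linarith
        have h₂ : 1 / (n : ℝ) ≤ 1 / (m + 2) := by gcongr
        exact mul_le_mul_of_nonneg_left (by linarith) (by positivity)

lemma sum_range_one_div_abs_node_sub_node_add_add_le {m : ℕ} (hn : n = 2 * k + m) :
    ∑ i ∈ range k, 1 / |node n k - node n (k + 1 + (m + i))| ≤ k * (n / √2) := by
  have hterm : ∀ i ∈ range k, 1 / |node n k - node n (k + 1 + (m + i))| ≤ n / √2 := by
    intro i hi
    have hik : i < k := mem_range.mp hi
    exact one_div_abs_node_sub_node_le_of_le_add (by lia) (by lia) (by lia) (by lia)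
  simpa only [card_range, nsmul_eq_mul] using sum_le_card_nsmul _ _ _ hterm

lemma sum_erase_one_div_abs_node_sub_node_le_sq (hk₁ : 1 ≤ k) (hk₂ : 2 * k ≤ n) :
    ∑ j ∈ (range (n + 1)).erase k, 1 / |node n k - node n j| ≤ n ^ 2 := by
  obtain ⟨m, hn⟩ := Nat.exists_eq_add_of_le hk₂
  have hsqrt : n / √2 ≤ 3 / 4 * n := by
    have h : 4 / 3 ≤ √2 := le_sqrt_of_sq_le (by norm_num)
    calc n / √2 ≤ n / (4 / 3) := by gcongr
      _ = 3 / 4 * n := by ring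
  calc ∑ j ∈ (range (n + 1)).erase k, 1 / |node n k - node n j|
      = ∑ j ∈ range k, 1 / |node n k - node n j| +
          ∑ i ∈ range m, 1 / |node n k - node n (k + 1 + i)| +
          ∑ i ∈ range k, 1 / |node n k - node n (k + 1 + (m + i))| := by
        rw [show n + 1 = k + 1 + (m + k) by lia, sum_range_erase_eq_add, sum_range_add, add_assoc]
    _ ≤ k * (n ^ 2 / (2 * (2 * k - 1))) + n ^ 2 / 2 * (3 / 4 - 1 / n) + k * (n / √2) :=
        add_le_add_three (sum_range_one_div_abs_node_sub_node_le (by lia))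
          (sum_range_one_div_abs_node_sub_node_add_le hk₁ hn.ge)
          (sum_range_one_div_abs_node_sub_node_add_add_le hn)
    _ ≤ k * (n ^ 2 / (2 * (2 * k - 1))) + n ^ 2 / 2 * (3 / 4 - 1 / n) + k * (3 / 4 * n) := by
        gcongr
    _ ≤ n ^ 2 := mul_sq_div_add_add_le_sq (by exact_mod_cast hk₁) (by exact_mod_cast hk₂)

end Node

lemma log_three_add_three_mul_log_five_eq : log 3 + 3 * log 5 = log 375 := by
  rw [show (375 : ℝ) = 3 * 5 ^ 3 by norm_num, log_mul (by norm_num) (by norm_num), log_pow]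
  norm_num

lemma five_le_log_375 : 5 ≤ log 375 := by
  rw [le_log_iff_exp_le (by norm_num)]
  calc exp 5 = exp 1 ^ 5 := by simp
    _ ≤ 3 ^ 5 := by gcongr; exact exp_one_lt_three.le
    _ ≤ 375 := by norm_num

lemma log_375_le_six : log 375 ≤ 6 := by
  rw [log_le_iff_le_exp (by norm_num)]
  calc (375 : ℝ) ≤ 2.7 ^ 6 := by norm_num
    _ ≤ exp 1 ^ 6 := by gcongr; linarith [exp_one_gt_d9]
    _ = exp 6 := by simp

theorem stmt_16 {n : ℕ} (hn : 2 ≤ n) (x : ℕ → ℝ)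
    (hx : ∀ j, x j = -Real.cos (j * Real.pi / n))
    (k : ℕ) (hk1 : 1 ≤ k) (hk2 : 2 * k ≤ n) :
    (∑ j ∈ (Finset.range (n + 1)).erase k, 1 / |x k - x j|) ≤
        n ^ 2 / (4 * Real.sqrt 2) * (1 + Real.log 3 + 3 * Real.log 5) ∧
      n ^ 2 / (4 * Real.sqrt 2) * (1 + Real.log 3 + 3 * Real.log 5) < 1.3 * n ^ 2 := by
  have hgap (j : ℕ) : |x k - x j| = |node n k - node n j| := by
    rw [hx, hx, neg_sub_neg, abs_sub_comm, node, node]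
  have hsqrt : 1.4 < √2 := lt_sqrt_of_sq_lt (by norm_num)
  simp only [hgap, add_assoc, log_three_add_three_mul_log_five_eq]
  rw [div_mul_eq_mul_div, le_div_iff₀ (by positivity), div_lt_iff₀ (by positivity),
    mul_comm 1.3, mul_assoc]
  constructor
  · gcongr
    · exact sum_erase_one_div_abs_node_sub_node_le_sq hk1 hk2
    · linarith [sqrt_two_lt_three_halves, five_le_log_375]
  · gcongr
    linarith [log_375_le_six]
end

section
/- Let n ≥ 1 and let x_j = −cos(jπ/n) be the Chebyshev points of the second kind. Then Σ_{j=1}^{n} 1/(x_j − x_0) ≤ π²·n²/12 < 0.9·n². -/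
/-! Put `h = π / n`, so that `x_j - x_0 = 1 - cos (j h)` with `j h ∈ (0, π]`. On `[-π, π]` the
graph of `1 - cos` lies above the parabola `2 t² / π²` that touches it at `0` and meets it at `± π`.
Hence each summand is at most `π² / (2 j² h²)`, and `ζ(2) = π² / 6` bounds the sum of the `1 / j²`.
The numerical estimate amounts to `π² < 10.8`. -/

open Finset Real

theorem one_div_one_sub_cos_le {t : ℝ} (ht : t ≠ 0) (htπ : |t| ≤ π) :
    1 / (1 - cos t) ≤ π ^ 2 / (2 * t ^ 2) := by
  have parabola_le : 2 / π ^ 2 * t ^ 2 ≤ 1 - cos t := by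
    linarith [cos_le_one_sub_mul_cos_sq htπ]
  calc 1 / (1 - cos t) ≤ 1 / (2 / π ^ 2 * t ^ 2) :=
        one_div_le_one_div_of_le (by positivity) parabola_le
    _ = π ^ 2 / (2 * t ^ 2) := by field_simp

theorem sum_one_div_sq_le_pi_sq_div_six (s : Finset ℕ) :
    ∑ j ∈ s, 1 / (j : ℝ) ^ 2 ≤ π ^ 2 / 6 :=
  sum_le_hasSum s (fun _ _ => by positivity) hasSum_zeta_two

theorem sum_one_div_one_sub_cos_le {h : ℝ} (hh : 0 < h) {N : ℕ} (hN : N * h ≤ π) :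
    ∑ j ∈ Icc 1 N, 1 / (1 - cos (j * h)) ≤ π ^ 4 / (12 * h ^ 2) := by
  have term_le : ∀ j ∈ Icc 1 N,
      1 / (1 - cos (j * h)) ≤ π ^ 2 / (2 * h ^ 2) * (1 / (j : ℝ) ^ 2) := by
    intro j hj
    obtain ⟨one_le_j, j_le_N⟩ := mem_Icc.mp hj
    have j_pos : (0 : ℝ) < j := by exact_mod_cast one_le_j
    have angle_pos : 0 < j * h := mul_pos j_pos hh
    have abs_angle_le : |j * h| ≤ π := by
      rw [abs_of_pos angle_pos]
      exact le_trans (by gcongr) hN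
    calc 1 / (1 - cos (j * h)) ≤ π ^ 2 / (2 * (j * h) ^ 2) :=
          one_div_one_sub_cos_le angle_pos.ne' abs_angle_le
      _ = π ^ 2 / (2 * h ^ 2) * (1 / (j : ℝ) ^ 2) := by field_simp
  calc ∑ j ∈ Icc 1 N, 1 / (1 - cos (j * h))
      ≤ ∑ j ∈ Icc 1 N, π ^ 2 / (2 * h ^ 2) * (1 / (j : ℝ) ^ 2) := sum_le_sum term_le
    _ = π ^ 2 / (2 * h ^ 2) * ∑ j ∈ Icc 1 N, 1 / (j : ℝ) ^ 2 := (mul_sum ..).symm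
    _ ≤ π ^ 2 / (2 * h ^ 2) * (π ^ 2 / 6) := by
        gcongr
        exact sum_one_div_sq_le_pi_sq_div_six _
    _ = π ^ 4 / (12 * h ^ 2) := by field_simp; norm_num

theorem stmt_17 {n : ℕ} (hn : 1 ≤ n) (x : ℕ → ℝ)
    (hx : ∀ j, x j = -Real.cos (j * Real.pi / n)) :
    (∑ j ∈ Finset.Icc 1 n, 1 / (x j - x 0)) ≤ Real.pi ^ 2 * n ^ 2 / 12 ∧
      Real.pi ^ 2 * n ^ 2 / 12 < 0.9 * n ^ 2 := by
  have n_pos : (0 : ℝ) < n := by exact_mod_cast hn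
  constructor
  · have node_sub (j : ℕ) : x j - x 0 = 1 - cos (j * (π / n)) := by
      rw [hx, hx, Nat.cast_zero, zero_mul, zero_div, cos_zero, mul_div_assoc]
      ring
    calc ∑ j ∈ Icc 1 n, 1 / (x j - x 0)
        = ∑ j ∈ Icc 1 n, 1 / (1 - cos (j * (π / n))) := by simp only [node_sub]
      _ ≤ π ^ 4 / (12 * (π / n) ^ 2) :=
          sum_one_div_one_sub_cos_le (by positivity) (mul_div_cancel₀ π n_pos.ne').le
      _ = π ^ 2 * n ^ 2 / 12 := by field_simp
  · have pi_sq_lt : π ^ 2 < 10.8 := by nlinarith [pi_lt_d2, pi_pos]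
    calc π ^ 2 * (n : ℝ) ^ 2 / 12 < 10.8 * (n : ℝ) ^ 2 / 12 := by gcongr
      _ = 0.9 * (n : ℝ) ^ 2 := by ring
end

section
/- Let n ≥ 1, let x_k = −cos(kπ/n) be the Chebyshev points of the second kind, let θ ∈ ℝ^{n+1}, and define the binned rounded nodes x̃_k as follows: if x_k < −1/2 then x̃_k := −1 + (x_k + 1)(1 + θ_k); if |x_k| ≤ 1/2 then x̃_k := x_k·(1 + θ_k); if x_k > 1/2 then x̃_k := 1 + (x_k − 1)(1 + θ_k). Then for every k ∈ {0, …, n} there exists a real ε_k with |ε_k| ≤ ‖θ‖_∞ such that x̃_k + 1 = (x_k + 1)(1 + ε_k), where ‖θ‖_∞ = max_k |θ_k|. -/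
/-!
In each bin the rounding is a relative perturbation of the distance to a reference point
`c ∈ {-1, 0, 1}`, namely `c + (x - c) * (1 + t)`. Its error `(x - c) * t` is also an error relative
to `x + 1`, of relative size `(x - c) / (x + 1) * t`, and this is at most `|t|` in absolute value
because `c` is at least as close to `x` as `-1` is.
-/

section BinnedRounding

variable {K : Type*} [Field K] [LinearOrder K]

/-- The reference point of the bin containing `x`: the point of `{-1, 0, 1}` relative to which
binned rounding perturbs `x`. -/
def binCenter (x : K) : K :=
  if x < -(1 / 2) then -1 else if |x| ≤ 1 / 2 then 0 else 1

/-- Binned rounding of the node `x` with relative error `t`, by the three-case formula of the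
paper. It is total: nodes outside `[-1, 1]` belong to the outer bins. -/
def binnedRound (x t : K) : K :=
  if x < -(1 / 2) then -1 + (x + 1) * (1 + t)
  else if |x| ≤ 1 / 2 then x * (1 + t)
  else 1 + (x - 1) * (1 + t)

theorem binnedRound_eq_binCenter_add (x t : K) :
    binnedRound x t = binCenter x + (x - binCenter x) * (1 + t) := by
  unfold binnedRound binCenter
  split_ifs <;> ring

variable [IsStrictOrderedRing K]

theorem exists_abs_le_add_sub_mul_one_add_sub_eq {a c x : K} (hc : |x - c| ≤ |x - a|) (t : K) :
    ∃ ε : K, |ε| ≤ |t| ∧ c + (x - c) * (1 + t) - a = (x - a) * (1 + ε) := by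
  refine ⟨(x - c) / (x - a) * t, ?_, ?_⟩
  · rw [abs_mul, abs_div]
    exact mul_le_of_le_one_left (abs_nonneg t) (div_le_one_of_le₀ hc (abs_nonneg _))
  · have hcancel : (x - a) * ((x - c) / (x - a)) = x - c :=
      mul_div_cancel_of_imp' fun hxa => abs_nonpos_iff.mp (by simpa only [hxa, abs_zero] using hc)
    linear_combination -t * hcancel

theorem abs_sub_binCenter_le_abs_add_one (x : K) : |x - binCenter x| ≤ |x + 1| := by
  unfold binCenter
  split_ifs with hleft hmid
  · rw [sub_neg_eq_add]
  · exact sq_le_sq.mp (by linarith)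
  · have hright : 1 / 2 < x := by
      by_contra! hx
      exact hmid (abs_le.mpr ⟨not_lt.mp hleft, hx⟩)
    exact sq_le_sq.mp (by linarith)

theorem exists_abs_le_binnedRound_add_one_eq (x t : K) :
    ∃ ε : K, |ε| ≤ |t| ∧ binnedRound x t + 1 = (x + 1) * (1 + ε) := by
  simpa only [binnedRound_eq_binCenter_add, sub_neg_eq_add] using
    exists_abs_le_add_sub_mul_one_add_sub_eq (a := -1)
      (by simpa only [sub_neg_eq_add] using abs_sub_binCenter_le_abs_add_one x) t

theorem stmt_18_general {ι : Type*} [Fintype ι] [Nonempty ι] (θ x : ι → K) (k : ι) :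
    ∃ ε : K, |ε| ≤ (Finset.univ.sup' Finset.univ_nonempty fun i => |θ i|) ∧
      binnedRound (x k) (θ k) + 1 = (x k + 1) * (1 + ε) := by
  obtain ⟨ε, hε, hround⟩ := exists_abs_le_binnedRound_add_one_eq (x k) (θ k)
  exact ⟨ε, hε.trans (Finset.le_sup' (fun i => |θ i|) (Finset.mem_univ k)), hround⟩

end BinnedRounding

theorem stmt_18 {n : ℕ} (hn : 1 ≤ n) (θ x xt : Fin (n + 1) → ℝ)
    (hx : ∀ k : Fin (n + 1), x k = -Real.cos ((k : ℕ) * Real.pi / n))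
    (hxt : ∀ k : Fin (n + 1), xt k =
      if x k < -(1 / 2) then -1 + (x k + 1) * (1 + θ k)
      else if |x k| ≤ 1 / 2 then x k * (1 + θ k)
      else 1 + (x k - 1) * (1 + θ k))
    (k : Fin (n + 1)) :
    ∃ ε : ℝ, |ε| ≤ (Finset.univ.sup' Finset.univ_nonempty fun i => |θ i|) ∧
      xt k + 1 = (x k + 1) * (1 + ε) := by
  rw [hxt k]
  exact stmt_18_general θ x k
end
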